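/- The W_p-optimal stopping topology on 𝒫_p(X̄) is finer than the W_p-information topology; that is, every set open in the W_p-information topology is open in the W_p-optimal stopping topology. -/

import Mathlib

open MeasureTheory ProbabilityTheory ENNReal Filter Topology

noncomputable section

namespace AWPaper

/-! ### Generic constructions -/

variable {α β : Type*}

/-- The set of couplings of two measures. -/
def Cpl [MeasurableSpace α] [MeasurableSpace β] (μ : Measure α) (ν : Measure β) :
    Set (Measure (α × β)) :=
  {π | π.map Prod.fst = μ ∧ π.map Prod.snd = ν}

/-- The `p`-Wasserstein distance (with values in `ℝ≥0∞`) associated to an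
`ℝ≥0∞`-valued distance function `d`. -/
def Wp [MeasurableSpace α] (p : ℝ) (d : α → α → ℝ≥0∞) (μ ν : Measure α) : ℝ≥0∞ :=
  ⨅ π ∈ Cpl μ ν, (∫⁻ z, d z.1 z.2 ^ p ∂π) ^ (1 / p)

/-- The topology generated by the open balls of an `ℝ≥0∞`-valued distance
function.  For a genuine metric this is the metric topology. -/
def ballTop (d : α → α → ℝ≥0∞) : TopologicalSpace α :=
  TopologicalSpace.generateFrom {s | ∃ x ε, 0 < ε ∧ s = {y | d x y < ε}}

/-- The product distance of two `ℝ≥0∞`-valued distances, `ℓ^p`-style. -/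
def prodDist (p : ℝ) (d₁ : α → α → ℝ≥0∞) (d₂ : β → β → ℝ≥0∞) :
    α × β → α × β → ℝ≥0∞ :=
  fun u v => (d₁ u.1 v.1 ^ p + d₂ u.2 v.2 ^ p) ^ (1 / p)

/-- Membership in the `p`-Wasserstein space: a probability measure with finite
`p`-th moment (w.r.t. the distance function `d`). -/
def MemPp [MeasurableSpace α] (p : ℝ) (d : α → α → ℝ≥0∞) (μ : Measure α) : Prop :=
  IsProbabilityMeasure μ ∧ ∃ x₀, ∫⁻ x, d x₀ x ^ p ∂μ ≠ ∞

/-- The weak topology on measures induced by integration of bounded continuous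
functions, for a given topology `τ` on the base space. -/
def weakTop [MeasurableSpace α] (τ : TopologicalSpace α) : TopologicalSpace (Measure α) :=
  TopologicalSpace.induced
    (fun μ => fun f : @BoundedContinuousFunction α ℝ τ _ => ∫ x, f x ∂μ)
    Pi.topologicalSpace

/-- The product topology built from two explicitly given topologies. -/
def prodTop (τ₁ : TopologicalSpace α) (τ₂ : TopologicalSpace β) : TopologicalSpace (α × β) :=
  TopologicalSpace.induced Prod.fst τ₁ ⊓ TopologicalSpace.induced Prod.snd τ₂

/-- An everywhere-defined version of the disintegration kernel: it agrees with
`Measure.condKernel` on finite measures. -/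
def condK [MeasurableSpace α] [MeasurableSpace β] [StandardBorelSpace β] [Nonempty β]
    (ρ : Measure (α × β)) : Kernel α β :=
  letI := Classical.dec (IsFiniteMeasure ρ)
  if h : IsFiniteMeasure ρ then @Measure.condKernel α β _ _ _ _ ρ h else 0

/-- The disintegration map `𝒫(A × B) → 𝒫(A × 𝒫(B))`. -/
def disint [MeasurableSpace α] [MeasurableSpace β] [StandardBorelSpace β] [Nonempty β]
    (μ : Measure (α × β)) : Measure (α × Measure β) :=
  μ.map (fun z => (z.1, condK μ z.1))

/-- The intensity ("und") map `𝒫(A × 𝒫(B)) → 𝒫(A × B)`. -/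
def und [MeasurableSpace α] [MeasurableSpace β] (μ : Measure (α × Measure β)) :
    Measure (α × β) :=
  μ.bind (fun z => (Measure.dirac z.1).prod z.2)

/-! ### Path spaces -/

variable {X : Type*} [MeasurableSpace X]

/-- The path-space distance `ρ̄((x_t),(y_t)) = (∑ ρ(x_t,y_t)^p)^{1/p}`. -/
def pathDist (p : ℝ) (d : X → X → ℝ≥0∞) {N : ℕ} :
    (Fin N → X) → (Fin N → X) → ℝ≥0∞ :=
  fun x y => (∑ t, d (x t) (y t) ^ p) ^ (1 / p)

/-- The first `t` coordinates of a path. -/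
def restr {N : ℕ} (t : ℕ) (h : t ≤ N) (x : Fin N → X) : Fin t → X :=
  fun s => x (Fin.castLE h s)

/-- The last `N - t` coordinates of a path. -/
def tailr {N : ℕ} (t : ℕ) (h : t ≤ N) (x : Fin N → X) : Fin (N - t) → X :=
  fun s => x ⟨t + s.1, by have := s.2; omega⟩

/-- A coupling `π` of two path measures is causal: for every `t` and Borel
`A ⊆ 𝒳^t`, `π((Y_1,…,Y_t) ∈ A | X) = π((Y_1,…,Y_t) ∈ A | X_1,…,X_t)` a.s. -/
def Causal {N : ℕ} (π : Measure ((Fin N → X) × (Fin N → X))) : Prop :=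
  ∀ (t : ℕ) (h : t ≤ N) (A : Set (Fin t → X)), MeasurableSet A →
    (π[fun z => A.indicator (fun _ => (1 : ℝ)) (restr t h z.2) |
        MeasurableSpace.comap Prod.fst inferInstance])
      =ᵐ[π]
    (π[fun z => A.indicator (fun _ => (1 : ℝ)) (restr t h z.2) |
        MeasurableSpace.comap (fun z => restr t h z.1) inferInstance])

/-- Bicausal couplings. -/
def Bicausal {N : ℕ} (π : Measure ((Fin N → X) × (Fin N → X))) : Prop :=
  Causal π ∧ Causal (π.map Prod.swap)

/-- The causal Wasserstein "distance" `CW_p`. -/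
def CW (p : ℝ) (d : X → X → ℝ≥0∞) {N : ℕ} (μ ν : Measure (Fin N → X)) : ℝ≥0∞ :=
  ⨅ π ∈ {π ∈ Cpl μ ν | Causal π}, (∫⁻ z, pathDist p d z.1 z.2 ^ p ∂π) ^ (1 / p)

/-- The symmetrized causal Wasserstein distance `SCW_p`. -/
def SCW (p : ℝ) (d : X → X → ℝ≥0∞) {N : ℕ} (μ ν : Measure (Fin N → X)) : ℝ≥0∞ :=
  max (CW p d μ ν) (CW p d ν μ)

/-- The adapted (nested, bicausal) Wasserstein distance `AW_p`. -/
def AW (p : ℝ) (d : X → X → ℝ≥0∞) {N : ℕ} (μ ν : Measure (Fin N → X)) : ℝ≥0∞ :=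
  ⨅ π ∈ {π ∈ Cpl μ ν | Bicausal π}, (∫⁻ z, pathDist p d z.1 z.2 ^ p ∂π) ^ (1 / p)

/-! ### Nested spaces (Pflug's nested distributions / Vershik's iterated spaces) -/

/-- A measurable space together with an `ℝ≥0∞`-valued distance. -/
structure QMS : Type 1 where
  carrier : Type
  inst : MeasurableSpace carrier
  dist : carrier → carrier → ℝ≥0∞

/-- The nested sequence of spaces: `nest X _ d p 0 = 𝒳` (this is `𝒳_N`), and
`nest X _ d p (k+1) = 𝒳 × 𝒫(nest X _ d p k)` with the nested distance
`D = (ρ^p + 𝒲_p^p)^{1/p}`.  Thus `𝒳_1` (for `N = k+1` time points) is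
`nest X _ d p k`. -/
def nest (X : Type) (mX : MeasurableSpace X) (d : X → X → ℝ≥0∞) (p : ℝ) : ℕ → QMS
  | 0 => ⟨X, mX, d⟩
  | (k + 1) =>
    let Q := nest X mX d p k
    ⟨X × @Measure Q.carrier Q.inst,
      @Prod.instMeasurableSpace _ _ mX (@Measure.instMeasurableSpace _ Q.inst),
      fun a b => (d a.1 b.1 ^ p + (@Wp _ Q.inst p Q.dist a.2 b.2) ^ p) ^ (1 / p)⟩

section NMapSec

variable (Y : Type) [mY : MeasurableSpace Y] [TopologicalSpace Y] [PolishSpace Y]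
  [BorelSpace Y] [Nonempty Y]

/-- The map `𝒩` sending the law of a process with `k+1` time steps to the
corresponding nested distribution, via iterated regular conditional laws. -/
def NMap (d : Y → Y → ℝ≥0∞) (p : ℝ) :
    ∀ k : ℕ, Measure (Fin (k + 1) → Y) →
      @Measure (nest Y mY d p k).carrier (nest Y mY d p k).inst
  | 0, μ =>
    letI : MeasurableSpace (nest Y mY d p 0).carrier := (nest Y mY d p 0).inst
    μ.map (fun x => x 0)
  | (k + 1), μ =>
    letI : MeasurableSpace (nest Y mY d p k).carrier := (nest Y mY d p k).inst
    letI : MeasurableSpace (nest Y mY d p (k + 1)).carrier := (nest Y mY d p (k + 1)).inst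
    (μ.map (fun x => x 0)).map
      (fun x₀ => (x₀, NMap d p k
        ((condK (μ.map (fun x => (x 0, fun s : Fin (k + 1) => x s.succ)))) x₀)))

end NMapSec

section PathStructures

variable {Y : Type*} [mY : MeasurableSpace Y]

/-- A process `L` is adapted: `L t` depends only on the first `t+1` coordinates. -/
def AdaptedProc {N : ℕ} (L : Fin N → (Fin N → Y) → ℝ) : Prop :=
  ∀ (t : Fin N) (x y : Fin N → Y), (∀ s : Fin N, s ≤ t → x s = y s) → L t x = L t y

/-- `τ` is a stopping time of the canonical filtration on the path space. -/
def IsStopTime {N : ℕ} (τ : (Fin N → Y) → Fin N) : Prop :=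
  ∀ t : Fin N,
    MeasurableSet[MeasurableSpace.comap (restr (X := Y) (t.1 + 1) t.2) inferInstance]
      {x | τ x = t}

/-- The optimal stopping value `v^L(μ)`. -/
def stopVal {N : ℕ} (L : Fin N → (Fin N → Y) → ℝ) (μ : Measure (Fin N → Y)) : ℝ :=
  ⨅ τ : {τ : (Fin N → Y) → Fin N // IsStopTime τ}, ∫ x, L (τ.1 x) x ∂μ

variable [TopologicalSpace Y]

/-- `AC(X̄)`: adapted processes which are continuous and bounded. -/
def ACbdd {N : ℕ} (L : Fin N → (Fin N → Y) → ℝ) : Prop :=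
  (∀ t, Continuous (L t)) ∧ AdaptedProc L ∧ ∃ C : ℝ, ∀ t x, |L t x| ≤ C

/-- `AC_p(X̄)`: adapted continuous processes of growth of order `p`. -/
def ACp (p : ℝ) (d : Y → Y → ℝ≥0∞) {N : ℕ} (L : Fin N → (Fin N → Y) → ℝ) : Prop :=
  (∀ t, Continuous (L t)) ∧ AdaptedProc L ∧
    ∃ (C : ℝ) (x₀ : Fin N → Y), ∀ t x, |L t x| ≤ C * (1 + ((pathDist p d x₀ x) ^ p).toReal)

/-- The optimal stopping topology (weak version, bounded continuous rewards). -/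
def stopTopW (N : ℕ) : TopologicalSpace (Measure (Fin N → Y)) :=
  ⨅ L : {L : Fin N → (Fin N → Y) → ℝ // ACbdd L},
    TopologicalSpace.induced (stopVal L.1) inferInstance

/-- The `𝒲_p`-optimal stopping topology. -/
def stopTopWp (p : ℝ) (d : Y → Y → ℝ≥0∞) (N : ℕ) :
    TopologicalSpace (Measure (Fin N → Y)) :=
  ⨅ L : {L : Fin N → (Fin N → Y) → ℝ // ACp p d L},
    TopologicalSpace.induced (stopVal L.1) inferInstance

variable [PolishSpace Y] [BorelSpace Y] [Nonempty Y]

/-- Hellwig's map `I_t`, sending `μ` to the joint law of the first `t`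
coordinates together with the conditional law of the remaining coordinates. -/
def infoMap (N t : ℕ) (h : t ≤ N) (μ : Measure (Fin N → Y)) :
    Measure ((Fin t → Y) × Measure (Fin (N - t) → Y)) :=
  μ.map (fun x => (restr t h x,
    condK (μ.map (fun y => (restr t h y, tailr t h y))) (restr t h x)))

/-- Hellwig's information topology (weak version). -/
def infoTopW (N : ℕ) : TopologicalSpace (Measure (Fin N → Y)) :=
  ⨅ (t : ℕ) (_ : 1 ≤ t) (h : t ≤ N - 1),
    TopologicalSpace.induced (infoMap N t (le_trans h (Nat.sub_le N 1)))
      (weakTop (prodTop Pi.topologicalSpace (weakTop Pi.topologicalSpace)))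

/-- The `𝒲_p`-information topology. -/
def infoTopWp (p : ℝ) (d : Y → Y → ℝ≥0∞) (N : ℕ) :
    TopologicalSpace (Measure (Fin N → Y)) :=
  ⨅ (t : ℕ) (_ : 1 ≤ t) (h : t ≤ N - 1),
    TopologicalSpace.induced (infoMap N t (le_trans h (Nat.sub_le N 1)))
      (ballTop (Wp p (prodDist p (pathDist p d) (Wp p (pathDist p d)))))

/-- Aldous' prediction process `Z_t^μ` (as a function of the path). -/
def predict (N : ℕ) (μ : Measure (Fin N → Y)) (t : ℕ) (h : t ≤ N) :
    (Fin N → Y) → Measure (Fin N → Y) :=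
  fun x => condK (μ.map (fun y => (restr t h y, y))) (restr t h x)

/-- Aldous' map `E`, sending `μ` to the joint law of the path together with its
prediction process. -/
def aldousMap (N : ℕ) (μ : Measure (Fin N → Y)) :
    Measure ((Fin N → Y) × (Fin (N + 1) → Measure (Fin N → Y))) :=
  μ.map (fun x =>
    (x, fun t : Fin (N + 1) => predict N μ t.1 (Nat.lt_succ_iff.mp t.2) x))

/-- Aldous' extended weak topology. -/
def aldousTopW (N : ℕ) : TopologicalSpace (Measure (Fin N → Y)) :=
  TopologicalSpace.induced (aldousMap N)
    (weakTop (prodTop Pi.topologicalSpace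
      (@Pi.topologicalSpace (Fin (N + 1)) (fun _ => Measure (Fin N → Y))
        (fun _ => weakTop Pi.topologicalSpace))))

/-- The extended `𝒲_p`-topology. -/
def aldousTopWp (p : ℝ) (d : Y → Y → ℝ≥0∞) (N : ℕ) :
    TopologicalSpace (Measure (Fin N → Y)) :=
  TopologicalSpace.induced (aldousMap N)
    (ballTop (Wp p (prodDist p (pathDist p d)
      (fun Z Z' : Fin (N + 1) → Measure (Fin N → Y) =>
        (∑ t, Wp p (pathDist p d) (Z t) (Z' t) ^ p) ^ (1 / p)))))

end PathStructures

/-! ### The lifted two-time-point space `𝒳₁ × 𝒫_p(𝒳₂)` -/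

section Lifted

variable {A B : Type*} [MeasurableSpace A] [MeasurableSpace B]

/-- The nested distance on `𝒳₁ × 𝒫_p(𝒳₂)`. -/
def liftDist (p : ℝ) (dA : A → A → ℝ≥0∞) (dB : B → B → ℝ≥0∞) :
    (A × Measure B) → (A × Measure B) → ℝ≥0∞ :=
  fun u v => (dA u.1 v.1 ^ p + Wp p dB u.2 v.2 ^ p) ^ (1 / p)

/-- `η` is a version of the measure-valued conditional expectation
`E_γ[X̂₂ | Y⃗]` (i.e. the barycenter of a regular conditional law of `X̂₂`
given `Y⃗ = (Y₁, Ŷ₂)`). -/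
def IsCondBar (γ : Measure ((A × Measure B) × (A × Measure B)))
    (η : (A × Measure B) × (A × Measure B) → Measure B) : Prop :=
  (∃ g : (A × Measure B) → Measure B, Measurable g ∧ ∀ z, η z = g z.2) ∧
  (∀ z, IsProbabilityMeasure (η z)) ∧
  ∀ S : Set (A × Measure B), MeasurableSet S → ∀ E : Set B, MeasurableSet E →
    ∫⁻ z in {z | z.2 ∈ S}, η z E ∂γ = ∫⁻ z in {z | z.2 ∈ S}, z.1.2 E ∂γ

/-- `AW̄_p`, the `p`-Wasserstein distance on `𝒫_p(𝒳₁ × 𝒫_p(𝒳₂))`. -/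
def AWbar (p : ℝ) (dA : A → A → ℝ≥0∞) (dB : B → B → ℝ≥0∞)
    (μ ν : Measure (A × Measure B)) : ℝ≥0∞ :=
  Wp p (liftDist p dA dB) μ ν

/-- `CW̄_p`, the lifted causal Wasserstein "distance". -/
def CWbar (p : ℝ) (dA : A → A → ℝ≥0∞) (dB : B → B → ℝ≥0∞)
    (μ ν : Measure (A × Measure B)) : ℝ≥0∞ :=
  ⨅ γ ∈ Cpl μ ν, ⨅ η ∈ {η | IsCondBar γ η},
    (∫⁻ z, (dA z.1.1 z.2.1 ^ p + Wp p dB (η z) z.2.2 ^ p) ∂γ) ^ (1 / p)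

/-- `SCW̄_p`, the symmetrization of `CW̄_p`. -/
def SCWbar (p : ℝ) (dA : A → A → ℝ≥0∞) (dB : B → B → ℝ≥0∞)
    (μ ν : Measure (A × Measure B)) : ℝ≥0∞ :=
  max (CWbar p dA dB μ ν) (CWbar p dA dB ν μ)

/-- Membership in `𝒫_p(𝒳₁ × 𝒫_p(𝒳₂))`: a probability measure, concentrated on
`𝒳₁ × 𝒫_p(𝒳₂)`, with finite `p`-th moment for the nested distance. -/
def MemPpLift (p : ℝ) (dA : A → A → ℝ≥0∞) (dB : B → B → ℝ≥0∞)
    (μ : Measure (A × Measure B)) : Prop :=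
  IsProbabilityMeasure μ ∧ (∀ᵐ z ∂μ, MemPp p dB z.2) ∧
    ∃ z₀ : A × Measure B, MemPp p dB z₀.2 ∧ ∫⁻ z, liftDist p dA dB z₀ z ^ p ∂μ ≠ ∞

/-- Two-time-point causality: given a coupling `π` of measures on products
`A₁ × B₁` and `A₂ × B₂`, the conditional law of `Y₁` given `X = (X₁, X₂)`
coincides with the conditional law of `Y₁` given `X₁`. -/
def Causal2 {A₁ B₁ A₂ B₂ : Type*} [MeasurableSpace A₁] [MeasurableSpace B₁]
    [MeasurableSpace A₂] [MeasurableSpace B₂]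
    (π : Measure ((A₁ × B₁) × (A₂ × B₂))) : Prop :=
  ∀ S : Set A₂, MeasurableSet S →
    (π[fun z => S.indicator (fun _ => (1 : ℝ)) z.2.1 |
        MeasurableSpace.comap Prod.fst inferInstance])
      =ᵐ[π]
    (π[fun z => S.indicator (fun _ => (1 : ℝ)) z.2.1 |
        MeasurableSpace.comap (fun z => z.1.1) inferInstance])

/-- The two-time-point causal Wasserstein "distance" on `𝒫_p(𝒳₁ × 𝒳₂)`. -/
def CW2 (p : ℝ) (dA : A → A → ℝ≥0∞) (dB : B → B → ℝ≥0∞)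
    (μ ν : Measure (A × B)) : ℝ≥0∞ :=
  ⨅ π ∈ {π ∈ Cpl μ ν | Causal2 π},
    (∫⁻ z, (dA z.1.1 z.2.1 ^ p + dB z.1.2 z.2.2 ^ p) ∂π) ^ (1 / p)

end Lifted

/-
Stopping at time `t` for a reward `G`, or else at time `N` for a reward `F` of the later
coordinates, is worth `∫ max (G, ∫ F dμ_a)`. As `|x - y| = 2 max (x, y) - x - y`, the optimal
stopping topology makes `μ ↦ ∫ |G(a) - ∫ F dμ_a|` continuous for all continuous `G`, `F` of
`p`-growth. Cut the space of futures into finitely many small cells by a continuous partition of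
unity; up to a small cost, the conditional law `μ_a` is described by its vector of cell masses,
which is `L¹(μ)`-close to a bounded continuous function `g` of the past `a`. Continuity then forces
the cell masses of `ν_a` to be `L¹(ν)`-close to the same `g` for `ν` near `μ`. A second partition,
of the space of pasts, gives a coupling of the laws of the pasts under which both the pasts and the
values of `g` are close, and hence the laws of `(a, μ_a)` and `(a, ν_a)` are close.
-/

lemma edist_eq_tsub_add_tsub (a b : ℝ≥0∞) : edist a b = (a - b) + (b - a) := by
  induction a <;> induction b
  · rw [WeakPseudoEMetricSpace.edist_self, tsub_self, add_zero]
  · rename_i b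
    rw [(ENNReal.edist_eq_top_iff _ _).2 ⟨top_ne_coe, Or.inl rfl⟩, top_sub_coe, top_add]
  · rename_i a
    rw [(ENNReal.edist_eq_top_iff _ _).2 ⟨coe_ne_top, Or.inr rfl⟩, top_sub_coe, add_top]
  · rename_i a b
    change edist a b = _
    rw [edist_nndist, NNReal.nndist_eq, ← ENNReal.coe_sub, ← ENNReal.coe_sub, ← ENNReal.coe_add]
    congr 1
    rcases le_total a b with h | h <;> simp [tsub_eq_zero_of_le h]

lemma edist_le_edist_add_edist_add_edist (a b s t : ℝ≥0∞) :
    edist a b ≤ edist s t + edist s a + edist t b :=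
  calc edist a b ≤ edist a s + (edist s t + edist t b) :=
        (WeakPseudoEMetricSpace.edist_triangle _ _ _).trans
          (add_le_add_right (WeakPseudoEMetricSpace.edist_triangle _ _ _) _)
    _ = edist s t + edist s a + edist t b := by
      rw [WeakPseudoEMetricSpace.edist_comm a s]
      ring

lemma edist_le_add (a b : ℝ≥0∞) : edist a b ≤ a + b := by
  rw [edist_eq_tsub_add_tsub]
  gcongr <;> exact tsub_le_self

lemma edist_add_add_eq_two_mul_max (a b : ℝ≥0∞) : edist a b + (a + b) = 2 * max a b := by
  rw [edist_eq_tsub_add_tsub]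
  rcases le_total a b with h | h
  · rw [tsub_eq_zero_of_le h, zero_add, ← add_assoc, tsub_add_cancel_of_le h, max_eq_right h,
      two_mul]
  · rw [tsub_eq_zero_of_le h, add_zero, add_comm a, ← add_assoc, tsub_add_cancel_of_le h,
      max_eq_left h, two_mul]

lemma continuous_edist_ennreal {c : ℝ≥0∞} (hc : c ≠ ∞) : Continuous (edist c) := by
  simp only [funext (edist_eq_tsub_add_tsub c)]
  exact (ENNReal.continuous_sub_left hc).add (ENNReal.continuous_sub_right c)

lemma measurable_edist_ennreal {S : Type*} [MeasurableSpace S] {f g : S → ℝ≥0∞}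
    (hf : Measurable f) (hg : Measurable g) : Measurable fun x ↦ edist (f x) (g x) := by
  simp only [edist_eq_tsub_add_tsub]
  exact (hf.sub hg).add (hg.sub hf)

lemma lintegral_edist_eq {S : Type*} [MeasurableSpace S] {μ : Measure S} {f g : S → ℝ≥0∞}
    (hf : Measurable f) (hg : Measurable g) (hfg : ∫⁻ x, f x ∂μ + ∫⁻ x, g x ∂μ ≠ ∞) :
    ∫⁻ x, edist (f x) (g x) ∂μ =
      2 * ∫⁻ x, max (f x) (g x) ∂μ - (∫⁻ x, f x ∂μ + ∫⁻ x, g x ∂μ) := by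
  refine ENNReal.eq_sub_of_add_eq hfg ?_
  have hsum : Measurable fun x ↦ f x + g x := hf.add hg
  rw [← lintegral_add_left hf, ← lintegral_add_right _ hsum, ← lintegral_const_mul _ (hf.max hg)]
  simp only [edist_add_add_eq_two_mul_max]

section Couplings

open Measure

variable {S : Type*} [MeasurableSpace S]

lemma smul_prod_mem_Cpl {T : Type*} [MeasurableSpace T] {μ : Measure S} {ν : Measure T}
    [IsFiniteMeasure μ] [IsFiniteMeasure ν] (h : μ .univ = ν .univ) :
    (μ .univ)⁻¹ • μ.prod ν ∈ Cpl μ ν := by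
  rcases eq_or_ne (μ .univ) 0 with h0 | h0
  · have hμ : μ = 0 := measure_univ_eq_zero.1 h0
    have hν : ν = 0 := measure_univ_eq_zero.1 (h ▸ h0)
    simp [Cpl, hμ, hν]
  · constructor
    · rw [Measure.map_smul, Measure.map_fst_prod, ← h, smul_smul,
        ENNReal.inv_mul_cancel h0 (measure_ne_top _ _), one_smul]
    · rw [Measure.map_smul, Measure.map_snd_prod, smul_smul,
        ENNReal.inv_mul_cancel h0 (measure_ne_top _ _), one_smul]

lemma add_mem_Cpl {T : Type*} [MeasurableSpace T] {μ μ' : Measure S} {ν ν' : Measure T}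
    {π π' : Measure (S × T)} (h : π ∈ Cpl μ ν) (h' : π' ∈ Cpl μ' ν') :
    π + π' ∈ Cpl (μ + μ') (ν + ν') :=
  ⟨by rw [Measure.map_add _ _ measurable_fst, h.1, h'.1],
    by rw [Measure.map_add _ _ measurable_snd, h.2, h'.2]⟩

lemma sum_mem_Cpl {T ι : Type*} [MeasurableSpace T] (s : Finset ι) {μ : ι → Measure S}
    {ν : ι → Measure T} {π : ι → Measure (S × T)} (h : ∀ i ∈ s, π i ∈ Cpl (μ i) (ν i)) :
    ∑ i ∈ s, π i ∈ Cpl (∑ i ∈ s, μ i) (∑ i ∈ s, ν i) := by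
  constructor
  · rw [Measure.map_finset_sum measurable_fst.aemeasurable]
    exact Finset.sum_congr rfl fun i hi ↦ (h i hi).1
  · rw [Measure.map_finset_sum measurable_snd.aemeasurable]
    exact Finset.sum_congr rfl fun i hi ↦ (h i hi).2

lemma univ_eq_fst_of_mem_Cpl {T : Type*} [MeasurableSpace T] {μ : Measure S} {ν : Measure T}
    {π : Measure (S × T)} (h : π ∈ Cpl μ ν) : π .univ = μ .univ := by
  rw [← h.1, Measure.map_apply measurable_fst .univ, Set.preimage_univ]

lemma univ_eq_snd_of_mem_Cpl {T : Type*} [MeasurableSpace T] {μ : Measure S} {ν : Measure T}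
    {π : Measure (S × T)} (h : π ∈ Cpl μ ν) : π .univ = ν .univ := by
  rw [← h.2, Measure.map_apply measurable_snd .univ, Set.preimage_univ]

lemma univ_eq_of_add_mass_eq {T : Type*} [MeasurableSpace T] {μ E : Measure S} {ν E' : Measure T}
    [IsFiniteMeasure μ] {π : Measure (S × T)} (hπ : π ∈ Cpl μ ν)
    (h : (μ + E) .univ = (ν + E') .univ) : E .univ = E' .univ := by
  rw [Measure.add_apply, Measure.add_apply, ← univ_eq_snd_of_mem_Cpl hπ,
    univ_eq_fst_of_mem_Cpl hπ] at h
  exact (ENNReal.add_right_inj (measure_ne_top μ _)).1 h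

lemma lintegral_fst_add_snd_of_mem_Cpl {T : Type*} [MeasurableSpace T] {μ : Measure S}
    {ν : Measure T} {π : Measure (S × T)} (hπ : π ∈ Cpl μ ν) {f : S → ℝ≥0∞} {g : T → ℝ≥0∞}
    (hf : Measurable f) (hg : Measurable g) :
    ∫⁻ z, (f z.1 + g z.2) ∂π = ∫⁻ x, f x ∂μ + ∫⁻ y, g y ∂ν := by
  rw [lintegral_add_left (by fun_prop), ← hπ.1, ← hπ.2, lintegral_map hf measurable_fst,
    lintegral_map hg measurable_snd]

variable {κ : S → S → ℝ≥0∞} {w : S → ℝ≥0∞}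

lemma lintegral_le_mul_of_mem_Cpl {μ ν : Measure S} {π : Measure (S × S)} (hπ : π ∈ Cpl μ ν)
    {T : Set S} {ε : ℝ≥0∞} (hμ : ∀ᵐ x ∂μ, x ∈ T) (hν : ∀ᵐ y ∂ν, y ∈ T)
    (hκ : ∀ x ∈ T, ∀ y ∈ T, κ x y ≤ ε) : ∫⁻ z, κ z.1 z.2 ∂π ≤ ε * μ .univ := by
  have hfst : ∀ᵐ z ∂π, z.1 ∈ T := ae_of_ae_map measurable_fst.aemeasurable (hπ.1 ▸ hμ)
  have hsnd : ∀ᵐ z ∂π, z.2 ∈ T := ae_of_ae_map measurable_snd.aemeasurable (hπ.2 ▸ hν)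
  calc ∫⁻ z, κ z.1 z.2 ∂π ≤ ∫⁻ _, ε ∂π := by
        refine lintegral_mono_ae ?_
        filter_upwards [hfst, hsnd] with z h₁ h₂ using hκ _ h₁ _ h₂
    _ = ε * μ .univ := by rw [lintegral_const, univ_eq_fst_of_mem_Cpl hπ]

lemma lintegral_le_add_of_mem_Cpl {μ ν : Measure S} {π : Measure (S × S)} (hπ : π ∈ Cpl μ ν)
    (hw : Measurable w) (hκ : ∀ x y, κ x y ≤ w x + w y) :
    ∫⁻ z, κ z.1 z.2 ∂π ≤ ∫⁻ x, w x ∂μ + ∫⁻ y, w y ∂ν :=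
  (lintegral_mono fun _ ↦ hκ _ _).trans_eq (lintegral_fst_add_snd_of_mem_Cpl hπ hw hw)

lemma exists_add_eq_of_mass (μ : Measure S) [IsFiniteMeasure μ] (b : ℝ≥0∞) :
    ∃ μ₁ μ₂ : Measure S, μ₁ + μ₂ = μ ∧ μ₁ .univ = min (μ .univ) b ∧ μ₂ .univ = μ .univ - b := by
  have hdiv : min (μ .univ) b / μ .univ ≤ 1 := ENNReal.div_le_of_le_mul (by simp)
  have hcancel : min (μ .univ) b / μ .univ * μ .univ = min (μ .univ) b := by
    refine ENNReal.div_mul_cancel' (fun h ↦ ?_) (fun h ↦ (measure_ne_top μ _ h).elim)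
    rw [h, zero_min]
  refine ⟨(min (μ .univ) b / μ .univ) • μ, (1 - min (μ .univ) b / μ .univ) • μ, ?_, ?_, ?_⟩
  · rw [← add_smul, add_tsub_cancel_of_le hdiv, one_smul]
  · rw [Measure.smul_apply, smul_eq_mul, hcancel]
  · rw [Measure.smul_apply, smul_eq_mul, ENNReal.sub_mul fun _ _ ↦ measure_ne_top _ _, one_mul,
      hcancel, tsub_min]

lemma lintegral_sum_add_measure_le {ι : Type*} [Fintype ι] {M : ι → Measure S} {M₀ : Measure S}
    {R : ℝ≥0∞} (hM : ∀ i, ∀ᵐ x ∂M i, w x ≤ R) :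
    ∫⁻ x, w x ∂(∑ i, M i + M₀) ≤ R * ∑ i, M i .univ + ∫⁻ x, w x ∂M₀ := by
  rw [lintegral_add_measure, lintegral_finsetSum_measure, Finset.mul_sum]
  gcongr with i
  exact (lintegral_mono_ae (hM i)).trans_eq (lintegral_const R)

lemma exists_partial_coupling {μ ν : Measure S} [IsFiniteMeasure μ] [IsFiniteMeasure ν]
    {T : Set S} {ε : ℝ≥0∞} (hμ : ∀ᵐ x ∂μ, x ∈ T) (hν : ∀ᵐ y ∂ν, y ∈ T)
    (hκ : ∀ x ∈ T, ∀ y ∈ T, κ x y ≤ ε) :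
    ∃ (π : Measure (S × S)) (E E' : Measure S), π.map Prod.fst + E = μ ∧ π.map Prod.snd + E' = ν ∧
      ∫⁻ z, κ z.1 z.2 ∂π ≤ ε * μ .univ ∧
      E .univ = μ .univ - ν .univ ∧ E' .univ = ν .univ - μ .univ := by
  obtain ⟨O, E, hOE, hO, hE⟩ := exists_add_eq_of_mass μ (ν .univ)
  obtain ⟨O', E', hOE', hO', hE'⟩ := exists_add_eq_of_mass ν (μ .univ)
  have hOμ : O ≤ μ := hOE ▸ Measure.le_add_right le_rfl
  have hOν : O' ≤ ν := hOE' ▸ Measure.le_add_right le_rfl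
  have := isFiniteMeasure_of_le μ hOμ
  have := isFiniteMeasure_of_le ν hOν
  have hπ := smul_prod_mem_Cpl (hO.trans ((min_comm _ _).trans hO'.symm))
  refine ⟨_, E, E', hπ.1.symm ▸ hOE, hπ.2.symm ▸ hOE', ?_, hE, hE'⟩
  refine (lintegral_le_mul_of_mem_Cpl hπ (ae_mono hOμ hμ) (ae_mono hOν hν) hκ).trans ?_
  gcongr

/- Match the common mass inside each piece and transport the excess arbitrarily. -/
theorem exists_mem_Cpl_lintegral_le {ι : Type*} [Fintype ι] {M M' : ι → Measure S}
    {M₀ M₀' : Measure S} [∀ i, IsFiniteMeasure (M i)] [∀ i, IsFiniteMeasure (M' i)]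
    [IsFiniteMeasure M₀] [IsFiniteMeasure M₀']
    (hmass : (∑ i, M i + M₀) .univ = (∑ i, M' i + M₀') .univ)
    (hw : Measurable w) (hκw : ∀ x y, κ x y ≤ w x + w y) {T : ι → Set S} {ε R : ℝ≥0∞}
    (hM : ∀ i, ∀ᵐ x ∂M i, x ∈ T i) (hM' : ∀ i, ∀ᵐ x ∂M' i, x ∈ T i)
    (hκ : ∀ i, ∀ x ∈ T i, ∀ y ∈ T i, κ x y ≤ ε) (hR : ∀ i, ∀ x ∈ T i, w x ≤ R) :
    ∃ π ∈ Cpl (∑ i, M i + M₀) (∑ i, M' i + M₀'), ∫⁻ z, κ z.1 z.2 ∂π ≤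
      ε * ∑ i, M i .univ + R * ∑ i, edist (M i .univ) (M' i .univ)
        + (∫⁻ x, w x ∂M₀ + ∫⁻ x, w x ∂M₀') := by
  choose π E E' hE hE' hπ hEmass hE'mass using
    fun i ↦ exists_partial_coupling (hM i) (hM' i) (hκ i)
  have hEM i : E i ≤ M i := hE i ▸ Measure.le_add_left le_rfl
  have hEM' i : E' i ≤ M' i := hE' i ▸ Measure.le_add_left le_rfl
  have hπfin i : IsFiniteMeasure ((π i).map Prod.fst) :=
    isFiniteMeasure_of_le (M i) (hE i ▸ Measure.le_add_right le_rfl)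
  have hEfin i : IsFiniteMeasure (E i) := isFiniteMeasure_of_le _ (hEM i)
  have hE'fin i : IsFiniteMeasure (E' i) := isFiniteMeasure_of_le _ (hEM' i)
  have hsplit : ∑ i, M i + M₀ = ∑ i, (π i).map Prod.fst + (∑ i, E i + M₀) := by
    simp only [← add_assoc, ← Finset.sum_add_distrib, hE]
  have hsplit' : ∑ i, M' i + M₀' = ∑ i, (π i).map Prod.snd + (∑ i, E' i + M₀') := by
    simp only [← add_assoc, ← Finset.sum_add_distrib, hE']
  have hmatched : ∑ i, π i ∈ Cpl (∑ i, (π i).map Prod.fst) (∑ i, (π i).map Prod.snd) :=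
    sum_mem_Cpl .univ fun i _ ↦ ⟨rfl, rfl⟩
  have hfree := smul_prod_mem_Cpl (univ_eq_of_add_mass_eq hmatched (hsplit ▸ hsplit' ▸ hmass))
  refine ⟨_, hsplit ▸ hsplit' ▸ add_mem_Cpl hmatched hfree, ?_⟩
  have hE_le := lintegral_sum_add_measure_le (M₀ := M₀) fun i ↦
    Eventually.mono (ae_mono (hEM i) (hM i)) (hR i)
  have hE'_le := lintegral_sum_add_measure_le (M₀ := M₀') fun i ↦
    Eventually.mono (ae_mono (hEM' i) (hM' i)) (hR i)
  have hfree_le := (lintegral_le_add_of_mem_Cpl hfree hw hκw).trans (add_le_add hE_le hE'_le)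
  rw [lintegral_add_measure, lintegral_finsetSum_measure]
  simp only [edist_eq_tsub_add_tsub, Finset.sum_add_distrib, ← hEmass, ← hE'mass, mul_add]
  refine (add_le_add (Finset.sum_le_sum fun i _ ↦ hπ i) hfree_le).trans_eq ?_
  rw [← Finset.mul_sum]
  ring

end Couplings

section CellPartition

open scoped NNReal

lemma isFiniteMeasure_withDensity_of_le_one {S : Type*} [MeasurableSpace S] (m : Measure S)
    [IsFiniteMeasure m] {f : S → ℝ≥0} (hf : ∀ x, f x ≤ 1) :
    IsFiniteMeasure (m.withDensity fun x ↦ f x) :=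
  isFiniteMeasure_withDensity <| ne_top_of_le_ne_top (measure_ne_top m .univ) <|
    (lintegral_mono fun x ↦ ENNReal.coe_le_one_iff.2 (hf x)).trans_eq lintegral_one

universe u

variable {S : Type u} [TopologicalSpace S]

lemma exists_countable_partition_of_mem_nhds [NormalSpace S] [ParacompactSpace S]
    [SecondCountableTopology S] {U : S → Set S} (hU : ∀ x, U x ∈ 𝓝 x) :
    ∃ (c : Set S) (u : c → C(S, ℝ≥0)), c.Countable ∧ (∀ x, HasSum (fun i ↦ u i x) 1) ∧
      ∀ i, Function.support (u i) ⊆ U i := by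
  obtain ⟨c, hc, hcover⟩ := TopologicalSpace.countable_cover_nhds fun x ↦ interior_mem_nhds.2 (hU x)
  obtain ⟨f, hf⟩ := PartitionOfUnity.exists_isSubordinate isClosed_univ
    (fun i : c ↦ interior (U i)) (fun _ ↦ isOpen_interior) (by rw [← hcover, Set.biUnion_eq_iUnion])
  refine ⟨c, fun i ↦ ContinuousMap.realToNNReal.comp (f i), hc, fun x ↦ ?_, fun i x hx ↦ ?_⟩
  · have hsum : HasSum (fun i ↦ f i x) 1 := by
      have hfin : (Function.support fun i ↦ f i x).Finite := f.locallyFinite.point_finite x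
      rw [← f.sum_eq_one (Set.mem_univ x), ← tsum_eq_finsum (L := .unconditional _) hfin]
      exact (summable_of_hasFiniteSupport hfin).hasSum
    rw [← NNReal.hasSum_coe]
    simpa [f.nonneg] using hsum
  · refine interior_subset (hf i (subset_tsupport _ fun h ↦ hx ?_))
    simp [h]

lemma exists_mem_nhds_cost_le {κ : S → S → ℝ≥0∞} {ε : ℝ≥0∞} (hε : ε ≠ 0)
    (hκ : Continuous (Function.uncurry κ)) {x : S} (hx : κ x x = 0) (w : C(S, ℝ≥0)) :
    ∃ U ∈ 𝓝 x, (∀ y ∈ U, ∀ z ∈ U, κ y z ≤ ε) ∧ ∀ y ∈ U, w y ≤ w x + 1 := by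
  have hcost : ∀ᶠ z : S × S in 𝓝 x ×ˢ 𝓝 x, κ z.1 z.2 < ε := by
    rw [← nhds_prod_eq]
    refine hκ.continuousAt.eventually_lt_const ?_
    simpa only [Function.uncurry_apply_pair, hx] using pos_iff_ne_zero.2 hε
  have hweight : ∀ᶠ y in 𝓝 x, w y < w x + 1 :=
    w.continuous.continuousAt.eventually_lt_const (lt_add_one _)
  obtain ⟨V, hV, hVκ⟩ := (eventually_prod_self_iff (r := fun y z ↦ κ y z < ε)).1 hcost
  exact ⟨V ∩ {y | w y < w x + 1}, inter_mem hV hweight,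
    fun y hy z hz ↦ (hVκ y hy.1 z hz.1).le, fun y hy ↦ hy.2.le⟩

/-- A finite continuous partition of unity `bump, rest` of `S` adapted to a transport cost `κ` and a
weight `w`: points in the support of one `bump i` are at cost at most `ε` from each other, and there
the weight is at most `bound`. The function `rest` carries the part of the space that is not covered
by the cells. -/
structure CellPartition (κ : S → S → ℝ≥0∞) (w : C(S, ℝ≥0)) (ε : ℝ≥0∞) where
  ι : Type u
  [fintype : Fintype ι]
  bump : ι → C(S, ℝ≥0)
  rest : C(S, ℝ≥0)
  bound : ℝ≥0
  sum_bump_add_rest : ∀ x, ∑ i, bump i x + rest x = 1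
  cost_le : ∀ i, ∀ x ∈ Function.support (bump i), ∀ y ∈ Function.support (bump i), κ x y ≤ ε
  weight_le : ∀ i, ∀ x ∈ Function.support (bump i), w x ≤ bound

attribute [instance] CellPartition.fintype

namespace CellPartition

variable {κ : S → S → ℝ≥0∞} {w : C(S, ℝ≥0)} {ε : ℝ≥0∞}

/-- The transport cost left over when `m` is compared with the target cell masses `t`: the mass
missing in, or exceeding, each cell and the mass outside all cells, counted with the weight `w`. -/
def defect [MeasurableSpace S] (P : CellPartition κ w ε) (t : P.ι → ℝ≥0∞) (m : Measure S) : ℝ≥0∞ :=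
  P.bound * ∑ i, edist (t i) (∫⁻ x, P.bump i x ∂m) + ∫⁻ x, P.rest x * w x ∂m

lemma defect_lintegral_bump [MeasurableSpace S] (P : CellPartition κ w ε) (m : Measure S) :
    P.defect (fun i ↦ ∫⁻ x, P.bump i x ∂m) m = ∫⁻ x, P.rest x * w x ∂m := by
  simp [defect, WeakPseudoEMetricSpace.edist_self]

lemma sum_coe_bump_add_rest (P : CellPartition κ w ε) (x : S) :
    ∑ i, (P.bump i x : ℝ≥0∞) + P.rest x = 1 := by
  rw [← ENNReal.ofNNReal_finsetSum, ← ENNReal.coe_add, P.sum_bump_add_rest, ENNReal.coe_one]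

lemma bump_le_one (P : CellPartition κ w ε) (i : P.ι) (x : S) : P.bump i x ≤ 1 := by
  rw [← P.sum_bump_add_rest x]
  exact (Finset.single_le_sum (f := fun i ↦ P.bump i x) (fun _ _ ↦ zero_le)
    (Finset.mem_univ i)).trans le_self_add

lemma rest_le_one (P : CellPartition κ w ε) (x : S) : P.rest x ≤ 1 :=
  P.sum_bump_add_rest x ▸ le_add_self

variable [MeasurableSpace S] [OpensMeasurableSpace S]

lemma sum_withDensity_bump_add_rest (P : CellPartition κ w ε) (m : Measure S) :
    ∑ i, m.withDensity (fun x ↦ P.bump i x) + m.withDensity (fun x ↦ P.rest x) = m := by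
  ext s hs
  simp only [Measure.add_apply, Measure.finsetSum_apply, withDensity_apply _ hs]
  rw [← lintegral_finsetSum _ (by fun_prop), ← lintegral_add_right _ (by fun_prop)]
  simp only [P.sum_coe_bump_add_rest, setLIntegral_one]

lemma ae_withDensity_bump (P : CellPartition κ w ε) (m : Measure S) (i : P.ι) :
    ∀ᵐ x ∂m.withDensity fun x ↦ P.bump i x, x ∈ Function.support (P.bump i) := by
  rw [ae_withDensity_iff (by fun_prop)]
  exact .of_forall fun x hx ↦ by simpa using hx

theorem exists_mem_Cpl_lintegral_le (P : CellPartition κ w ε) (hκ : ∀ x y, κ x y ≤ w x + w y)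
    (m m' : Measure S) [IsProbabilityMeasure m] [IsProbabilityMeasure m'] (t t' : P.ι → ℝ≥0∞) :
    ∃ π ∈ Cpl m m', ∫⁻ z, κ z.1 z.2 ∂π ≤
      ε + P.bound * ∑ i, edist (t i) (t' i) + (P.defect t m + P.defect t' m') := by
  have hbump (n : Measure S) [IsProbabilityMeasure n] i :=
    isFiniteMeasure_withDensity_of_le_one n (P.bump_le_one i)
  have hrest (n : Measure S) [IsProbabilityMeasure n] :=
    isFiniteMeasure_withDensity_of_le_one n P.rest_le_one
  have hm := P.sum_withDensity_bump_add_rest m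
  have hm' := P.sum_withDensity_bump_add_rest m'
  have hmass : (∑ i, m.withDensity fun x ↦ P.bump i x) .univ ≤ m .univ := by
    conv_rhs => rw [← hm]
    exact Measure.le_add_right le_rfl _
  obtain ⟨π, hπ, hcost⟩ := AWPaper.exists_mem_Cpl_lintegral_le (κ := κ)
    (by rw [hm, hm', measure_univ, measure_univ]) (by fun_prop) hκ
    (P.ae_withDensity_bump m) (P.ae_withDensity_bump m') P.cost_le
    fun i x hx ↦ ENNReal.coe_le_coe.2 (P.weight_le i x hx)
  rw [hm, hm'] at hπ
  rw [← Measure.finsetSum_apply,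
    lintegral_withDensity_eq_lintegral_mul _ (by fun_prop) (by fun_prop),
    lintegral_withDensity_eq_lintegral_mul _ (by fun_prop) (by fun_prop)] at hcost
  simp only [withDensity_apply _ .univ, setLIntegral_univ, Pi.mul_apply] at hcost
  refine ⟨π, hπ, hcost.trans ?_⟩
  calc _ ≤ ε * 1 + P.bound * ∑ i, (edist (t i) (t' i) + edist (t i) (∫⁻ x, P.bump i x ∂m)
          + edist (t' i) (∫⁻ x, P.bump i x ∂m'))
        + (∫⁻ x, P.rest x * w x ∂m + ∫⁻ x, P.rest x * w x ∂m') := by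
        gcongr with i
        · exact hmass.trans_eq measure_univ
        · exact edist_le_edist_add_edist_add_edist _ _ _ _
    _ = _ := by
        simp only [defect, Finset.sum_add_distrib]
        ring

theorem exists_lintegral_rest_lt [NormalSpace S] [ParacompactSpace S] [SecondCountableTopology S]
    (hε : ε ≠ 0) (hκ : Continuous (Function.uncurry κ)) (hκ_self : ∀ x, κ x x = 0)
    {m : Measure S} (hw : ∫⁻ x, w x ∂m ≠ ∞) {δ : ℝ≥0∞} (hδ : δ ≠ 0) :
    ∃ P : CellPartition κ w ε, ∫⁻ x, P.rest x * w x ∂m < δ := by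
  choose U hU hUκ hUw using fun x ↦ exists_mem_nhds_cost_le hε hκ (hκ_self x) w
  obtain ⟨c, u, hc, hu, huU⟩ := exists_countable_partition_of_mem_nhds hU
  have := hc.to_subtype
  have hsum F x : ∑ i ∈ F, u i x ≤ 1 := sum_le_hasSum F (fun _ _ ↦ zero_le) (hu x)
  let rest (F : Finset c) : C(S, ℝ≥0) := 1 - ∑ i ∈ F, u i
  have hrest : Tendsto (fun F ↦ ∫⁻ x, rest F x * w x ∂m) atTop (𝓝 0) := by
    rw [← lintegral_zero (μ := m)]
    refine tendsto_lintegral_filter_of_dominated_convergence _ (.of_forall fun F ↦ ?_)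
      (.of_forall fun F ↦ .of_forall fun x ↦ ?_) hw (.of_forall fun x ↦ ?_)
    · fun_prop
    · rw [← ENNReal.coe_mul, ENNReal.coe_le_coe]
      exact mul_le_of_le_one_left' tsub_le_self
    · have hx : Tendsto (fun F ↦ rest F x) atTop (𝓝 (1 - 1)) := by
        simpa [rest] using (hu x).const_sub 1
      simpa using ENNReal.Tendsto.mul_const (ENNReal.tendsto_coe.2 hx) (.inr coe_ne_top)
  obtain ⟨F, hF⟩ := (hrest.eventually_lt_const (pos_iff_ne_zero.2 hδ)).exists
  refine ⟨⟨F, fun i ↦ u i, rest F, ∑ i ∈ F, (w i + 1), fun x ↦ ?_, fun i x hx y hy ↦ ?_,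
    fun i x hx ↦ ?_⟩, hF⟩
  · rw [Finset.sum_coe_sort F fun i ↦ u i x]
    simpa [rest] using add_tsub_cancel_of_le (hsum F x)
  · exact hUκ i x (huU _ hx) y (huU _ hy)
  · exact (hUw i x (huU _ hx)).trans
      (Finset.single_le_sum (f := fun i : c ↦ w i + 1) (fun _ _ ↦ zero_le) i.2)

end CellPartition

end CellPartition

section Gluing

variable {p : ℝ}

lemma lintegral_Lp_add_le_of_measurable_right {S : Type*} [MeasurableSpace S] (μ : Measure S)
    (hp : 1 ≤ p) (f : S → ℝ≥0∞) {g : S → ℝ≥0∞} (hg : Measurable g) :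
    (∫⁻ x, (f x + g x) ^ p ∂μ) ^ (1 / p) ≤
      (∫⁻ x, f x ^ p ∂μ) ^ (1 / p) + (∫⁻ x, g x ^ p ∂μ) ^ (1 / p) := by
  have hp0 : p ≠ 0 := by positivity
  obtain ⟨h, hh, hle, heq⟩ := exists_measurable_le_lintegral_eq μ fun x ↦ (f x + g x) ^ p
  have hroot : Measurable fun x ↦ h x ^ (1 / p) - g x := (hh.pow_const _).sub hg
  rw [heq]
  calc (∫⁻ x, h x ∂μ) ^ (1 / p)
      ≤ (∫⁻ x, ((fun x ↦ h x ^ (1 / p) - g x) + g) x ^ p ∂μ) ^ (1 / p) := by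
        gcongr with x
        calc h x = (h x ^ (1 / p)) ^ p := by rw [one_div, ENNReal.rpow_inv_rpow hp0]
          _ ≤ _ := by
            gcongr
            exact le_tsub_add
    _ ≤ _ := ENNReal.lintegral_Lp_add_le hroot.aemeasurable hg.aemeasurable hp
    _ ≤ _ := by
        gcongr with x
        rw [tsub_le_iff_right]
        calc h x ^ (1 / p) ≤ ((f x + g x) ^ p) ^ (1 / p) := by
              gcongr
              exact hle x
          _ = f x + g x := by rw [one_div, ENNReal.rpow_rpow_inv hp0]

lemma map_compProd_eq_map_prodMap {S T W : Type*} [MeasurableSpace S] [MeasurableSpace T]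
    [MeasurableSpace W] (μ : Measure S) [SFinite μ] (r : Kernel T W) [IsSFiniteKernel r] {F : S → T}
    (hF : Measurable F) : μ.map F ⊗ₘ r = (μ ⊗ₘ r.comap F hF).map (Prod.map F id) := by
  refine Measure.ext_of_lintegral _ fun f hf ↦ ?_
  rw [lintegral_map hf (by fun_prop), Measure.lintegral_compProd hf,
    lintegral_map hf.lintegral_kernel_prod_right' hF, Measure.lintegral_compProd (by fun_prop)]
  rfl

variable {Z W : Type*} [MeasurableSpace Z] [MeasurableSpace W]

lemma lintegral_fst_compProd_le (μ : Measure Z) [SFinite μ] (r : Kernel Z W) [IsMarkovKernel r]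
    (f : Z → ℝ≥0∞) : ∫⁻ z, f z.1 ∂(μ ⊗ₘ r) ≤ ∫⁻ z, f z ∂μ := by
  obtain ⟨h, hh, hle, heq⟩ := exists_measurable_le_lintegral_eq (μ ⊗ₘ r) fun z ↦ f z.1
  rw [heq, Measure.lintegral_compProd hh]
  gcongr with z
  calc ∫⁻ w, h (z, w) ∂r z ≤ ∫⁻ _, f z ∂r z := lintegral_mono fun w ↦ hle (z, w)
    _ = f z := by simp

lemma map_compProd_mem_Cpl {c m : Measure Z} [SFinite m] {π : Measure (Z × Z)} [SFinite π]
    (hπ : π ∈ Cpl c m) (r : Kernel Z W) [IsMarkovKernel r] {f : W → Z} (hf : Measurable f) :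
    (π ⊗ₘ r.comap Prod.snd measurable_snd).map (fun z ↦ (z.1.1, f z.2)) ∈
      Cpl c (((m ⊗ₘ r).map Prod.snd).map f) := by
  constructor
  · rw [← hπ.1, Measure.map_map measurable_fst (by fun_prop)]
    conv_rhs => rw [← Measure.fst_compProd π (r.comap Prod.snd measurable_snd), Measure.fst]
    rw [Measure.map_map measurable_fst measurable_fst]
    rfl
  · rw [← hπ.2, map_compProd_eq_map_prodMap π r measurable_snd,
      Measure.map_map measurable_snd (by fun_prop), Measure.map_map measurable_snd (by fun_prop),
      Measure.map_map hf (by fun_prop)]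
    rfl

/- `Wp` need not be measurable, so only the majorant `g` of the last leg of the gluing is assumed to
be so. -/
theorem Wp_map_snd_compProd_le (hp : 1 ≤ p) {D : Z → Z → ℝ≥0∞} (c m : Measure Z)
    [IsProbabilityMeasure m] (r : Kernel Z W) [IsMarkovKernel r] {f : W → Z} (hf : Measurable f)
    {g : Z × W → ℝ≥0∞} (hg : Measurable g)
    (hD : ∀ᵐ z ∂m, ∀ x w, D x (f w) ≤ D x z + g (z, w)) :
    Wp p D c (((m ⊗ₘ r).map Prod.snd).map f) ≤
      Wp p D c m + (∫⁻ z, g z ^ p ∂(m ⊗ₘ r)) ^ (1 / p) := by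
  simp only [Wp, ENNReal.iInf_add]
  refine le_iInf₂ fun π hπ ↦ ?_
  have : IsProbabilityMeasure π := ⟨by rw [univ_eq_snd_of_mem_Cpl hπ, measure_univ]⟩
  let Γ : Measure ((Z × Z) × W) := π ⊗ₘ r.comap Prod.snd measurable_snd
  have hDΓ : ∀ᵐ z ∂Γ, D z.1.1 (f z.2) ≤ D z.1.1 z.1.2 + g (z.1.2, z.2) := by
    rw [← hπ.2] at hD
    have hDπ := ae_of_ae_map measurable_snd.aemeasurable hD
    rw [← Measure.fst_compProd π (r.comap Prod.snd measurable_snd)] at hDπ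
    filter_upwards [ae_of_ae_map measurable_fst.aemeasurable hDπ] with z hz using hz _ _
  refine (iInf₂_le _ (map_compProd_mem_Cpl hπ r hf)).trans ?_
  calc _ ≤ (∫⁻ z, (D z.1.1 z.1.2 + g (z.1.2, z.2)) ^ p ∂Γ) ^ (1 / p) := by
        gcongr
        refine (lintegral_map_le _ _).trans (lintegral_mono_ae ?_)
        filter_upwards [hDΓ] with z hz
        gcongr
    _ ≤ _ := lintegral_Lp_add_le_of_measurable_right Γ hp (fun z ↦ D z.1.1 z.1.2) (by fun_prop)
    _ ≤ (∫⁻ z, D z.1 z.2 ^ p ∂π) ^ (1 / p) + (∫⁻ z, g z ^ p ∂(m ⊗ₘ r)) ^ (1 / p) := by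
        rw [← hπ.2, map_compProd_eq_map_prodMap π r measurable_snd,
          lintegral_map (by fun_prop) (by fun_prop)]
        gcongr ?_ ^ (1 / p) + ?_
        · exact lintegral_fst_compProd_le π _ fun z ↦ D z.1 z.2 ^ p
        · rfl

theorem Wp_triangle {B : Type*} [MeasurableSpace B] [StandardBorelSpace B] [Nonempty B]
    (hp : 1 ≤ p) {D : B → B → ℝ≥0∞} (hD : Measurable (Function.uncurry D))
    (htri : ∀ x y z, D x z ≤ D x y + D y z) (m₁ m₂ m₃ : Measure B) [IsProbabilityMeasure m₂] :
    Wp p D m₁ m₃ ≤ Wp p D m₁ m₂ + Wp p D m₂ m₃ := by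
  conv_rhs => rw [Wp.eq_1 p D m₂ m₃]
  simp only [ENNReal.add_iInf]
  refine le_iInf₂ fun π hπ ↦ ?_
  have : IsProbabilityMeasure π := ⟨by rw [univ_eq_fst_of_mem_Cpl hπ, measure_univ]⟩
  have hdis : m₂ ⊗ₘ π.condKernel = π := by
    rw [← hπ.1]
    exact π.disintegrate π.condKernel
  have := Wp_map_snd_compProd_le hp m₁ m₂ π.condKernel measurable_id hD
    (.of_forall fun y x z ↦ htri x y z)
  rwa [Measure.map_id, hdis, hπ.2] at this

end Gluing

section GraphLaw

open scoped NNReal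

variable {p : ℝ} {A B : Type*}

lemma prodDist_le_add (hp : 1 ≤ p) {d₁ : A → A → ℝ≥0∞} {d₂ : B → B → ℝ≥0∞}
    {u v w : A × B} (h₁ : d₁ u.1 w.1 ≤ d₁ u.1 v.1 + d₁ v.1 w.1)
    (h₂ : d₂ u.2 w.2 ≤ d₂ u.2 v.2 + d₂ v.2 w.2) :
    prodDist p d₁ d₂ u w ≤ prodDist p d₁ d₂ u v + prodDist p d₁ d₂ v w := by
  have hminkowski := ENNReal.Lp_add_le Finset.univ ![d₁ u.1 v.1, d₂ u.2 v.2]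
    ![d₁ v.1 w.1, d₂ v.2 w.2] hp
  simp only [Fin.sum_univ_two, Matrix.cons_val_zero, Matrix.cons_val_one] at hminkowski
  refine le_trans ?_ hminkowski
  rw [prodDist]
  gcongr

section Graph

variable [MeasurableSpace A] [MeasurableSpace B]

/-- The law of `(a, k a)` when `a` has law `μ`: the image of `μ` on the graph of the
measure-valued map `k`. -/
def graphLaw (μ : Measure A) (k : Kernel A B) : Measure (A × Measure B) :=
  μ.map fun a ↦ (a, k a)

lemma measurable_graph (k : Kernel A B) : Measurable fun a ↦ (a, k a) :=
  measurable_id.prodMk k.measurable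

lemma ae_graphLaw_isProbabilityMeasure (μ : Measure A) (k : Kernel A B) [IsMarkovKernel k] :
    ∀ᵐ z ∂graphLaw μ k, IsProbabilityMeasure z.2 := by
  simp only [isProbabilityMeasure_iff]
  refine (ae_map_iff (measurable_graph k).aemeasurable ?_).2 (.of_forall fun a ↦ measure_univ)
  exact measurableSet_eq_fun ((Measure.measurable_coe .univ).comp measurable_snd) measurable_const

theorem Wp_graphLaw_le_of_ae [StandardBorelSpace A] [Nonempty A] (hp : 1 ≤ p)
    {E : A × Measure B → A × Measure B → ℝ≥0∞} {μ ν : Measure A} [IsProbabilityMeasure μ]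
    (k k' : Kernel A B) {q : Measure (A × A)} (hq : q ∈ Cpl μ ν) (c : Measure (A × Measure B))
    {G : (A × Measure B) × A → ℝ≥0∞} (hG : Measurable G)
    (hE : ∀ᵐ z ∂graphLaw μ k, ∀ x a, E x (a, k' a) ≤ E x z + G (z, a)) :
    Wp p E c (graphLaw ν k') ≤
      Wp p E c (graphLaw μ k) + (∫⁻ z, G ((z.1, k z.1), z.2) ^ p ∂q) ^ (1 / p) := by
  have : IsProbabilityMeasure q := ⟨by rw [univ_eq_fst_of_mem_Cpl hq, measure_univ]⟩
  have : IsProbabilityMeasure (graphLaw μ k) :=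
    Measure.isProbabilityMeasure_map (measurable_graph k).aemeasurable
  let r : Kernel (A × Measure B) A := q.condKernel.comap Prod.fst measurable_fst
  have hgraph : Measurable (Prod.map (fun a ↦ (a, k a)) (id : A → A)) :=
    (measurable_graph k).prodMap measurable_id
  have hr : graphLaw μ k ⊗ₘ r = q.map (Prod.map (fun a ↦ (a, k a)) id) := by
    rw [graphLaw, map_compProd_eq_map_prodMap μ r (measurable_graph k), ← hq.1]
    exact congrArg _ (q.disintegrate q.condKernel)
  have hglue := Wp_map_snd_compProd_le hp c (graphLaw μ k) r (measurable_graph k') hG hE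
  rw [hr, Measure.map_map measurable_snd hgraph, lintegral_map (by fun_prop) hgraph] at hglue
  rwa [show Prod.snd ∘ Prod.map (fun a ↦ (a, k a)) (id : A → A) = Prod.snd from rfl, hq.2] at hglue

end Graph

namespace CellPartition

variable [TopologicalSpace B] {DA : A → A → ℝ≥0∞} {κ D : B → B → ℝ≥0∞} {w : C(B, ℝ≥0)} {ε : ℝ≥0∞}

/-- The transport cost on the base space induced by a distance `DA` and by the change of the target
cell masses `t` of a partition of the fibre. -/
def baseCost (P : CellPartition κ w ε) (p : ℝ) (DA : A → A → ℝ≥0∞) (t : A → P.ι → ℝ≥0∞)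
    (a a' : A) : ℝ≥0∞ :=
  DA a a' ^ p + P.bound * ∑ i, edist (t a i) (t a' i)

lemma measurable_baseCost [MeasurableSpace A] (P : CellPartition κ w ε)
    (hDA : Measurable (Function.uncurry DA)) {t : A → P.ι → ℝ≥0∞}
    (ht : ∀ i, Measurable fun a ↦ t a i) :
    Measurable fun z : A × A ↦ P.baseCost p DA t z.1 z.2 :=
  (hDA.pow_const p).add <| (Finset.measurable_fun_sum _ fun i _ ↦ measurable_edist_ennreal
    ((ht i).comp measurable_fst) ((ht i).comp measurable_snd)).const_mul _

variable [MeasurableSpace B] [OpensMeasurableSpace B]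

lemma measurable_defect [MeasurableSpace A] (P : CellPartition κ w ε) {t : A → P.ι → ℝ≥0∞}
    (ht : ∀ i, Measurable fun a ↦ t a i) {k : A → Measure B} (hk : Measurable k) :
    Measurable fun a ↦ P.defect (t a) (k a) := by
  have hint {f : B → ℝ≥0∞} (hf : Measurable f) : Measurable fun a ↦ ∫⁻ x, f x ∂k a :=
    (Measure.measurable_lintegral hf).comp hk
  exact ((Finset.measurable_fun_sum _ fun i _ ↦
    measurable_edist_ennreal (ht i) (hint (by fun_prop))).const_mul _).add (hint (by fun_prop))

lemma Wp_rpow_le (hp : 0 < p) (P : CellPartition (fun x y ↦ D x y ^ p) w ε)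
    (hD : ∀ x y, D x y ^ p ≤ w x + w y) (m m' : Measure B) [IsProbabilityMeasure m]
    [IsProbabilityMeasure m'] (t t' : P.ι → ℝ≥0∞) :
    Wp p D m m' ^ p ≤
      ε + P.bound * ∑ i, edist (t i) (t' i) + (P.defect t m + P.defect t' m') := by
  obtain ⟨π, hπ, hcost⟩ := P.exists_mem_Cpl_lintegral_le hD m m' t t'
  calc Wp p D m m' ^ p ≤ ((∫⁻ z, D z.1 z.2 ^ p ∂π) ^ (1 / p)) ^ p := by
        gcongr
        exact iInf₂_le π hπ
    _ = ∫⁻ z, D z.1 z.2 ^ p ∂π := by rw [one_div, ENNReal.rpow_inv_rpow hp.ne']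
    _ ≤ _ := hcost

lemma prodDist_Wp_le [StandardBorelSpace B] [Nonempty B] (hp : 1 ≤ p)
    (hDA_tri : ∀ x y z, DA x z ≤ DA x y + DA y z) (hD : Measurable (Function.uncurry D))
    (hD_tri : ∀ x y z, D x z ≤ D x y + D y z) (P : CellPartition (fun x y ↦ D x y ^ p) w ε)
    (hDw : ∀ x y, D x y ^ p ≤ w x + w y) (t : A → P.ι → ℝ≥0∞) (x y z : A × Measure B)
    [IsProbabilityMeasure y.2] [IsProbabilityMeasure z.2] :
    prodDist p DA (Wp p D) x z ≤ prodDist p DA (Wp p D) x y +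
      (P.baseCost p DA t y.1 z.1 + ε +
        (P.defect (t y.1) y.2 + P.defect (t z.1) z.2)) ^ (1 / p) := by
  refine (prodDist_le_add hp (hDA_tri _ _ _) (Wp_triangle hp hD hD_tri x.2 y.2 z.2)).trans ?_
  gcongr
  refine ENNReal.rpow_le_rpow ?_ (by positivity)
  calc DA y.1 z.1 ^ p + Wp p D y.2 z.2 ^ p
      ≤ DA y.1 z.1 ^ p + (ε + P.bound * ∑ i, edist (t y.1 i) (t z.1 i) +
          (P.defect (t y.1) y.2 + P.defect (t z.1) z.2)) := by
        gcongr
        exact P.Wp_rpow_le (by positivity) hDw y.2 z.2 (t y.1) (t z.1)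
    _ = _ := by
        rw [baseCost]
        ring

theorem Wp_graphLaw_le [MeasurableSpace A] [StandardBorelSpace A] [Nonempty A]
    [StandardBorelSpace B] [Nonempty B] (hp : 1 ≤ p) (hDA : Measurable (Function.uncurry DA))
    (hDA_tri : ∀ x y z, DA x z ≤ DA x y + DA y z) (hD : Measurable (Function.uncurry D))
    (hD_tri : ∀ x y z, D x z ≤ D x y + D y z) (P : CellPartition (fun x y ↦ D x y ^ p) w ε)
    (hDw : ∀ x y, D x y ^ p ≤ w x + w y) {t : A → P.ι → ℝ≥0∞} (ht : ∀ i, Measurable fun a ↦ t a i)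
    {μ ν : Measure A} [IsProbabilityMeasure μ] (k k' : Kernel A B) [IsMarkovKernel k]
    [IsMarkovKernel k'] {q : Measure (A × A)} (hq : q ∈ Cpl μ ν) (c : Measure (A × Measure B)) :
    Wp p (prodDist p DA (Wp p D)) c (graphLaw ν k') ≤
      Wp p (prodDist p DA (Wp p D)) c (graphLaw μ k) +
        (∫⁻ z, P.baseCost p DA t z.1 z.2 ∂q + ε +
          (∫⁻ a, P.defect (t a) (k a) ∂μ + ∫⁻ a, P.defect (t a) (k' a) ∂ν)) ^ (1 / p) := by
  have : IsProbabilityMeasure q := ⟨by rw [univ_eq_fst_of_mem_Cpl hq, measure_univ]⟩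
  have hcost := P.measurable_baseCost (p := p) hDA ht
  have hk := P.measurable_defect ht k.measurable
  have hk' := P.measurable_defect ht k'.measurable
  let G (z : (A × Measure B) × A) : ℝ≥0∞ := (P.baseCost p DA t z.1.1 z.2 + ε +
    (P.defect (t z.1.1) z.1.2 + P.defect (t z.2) (k' z.2))) ^ (1 / p)
  have hG : Measurable G :=
    (((hcost.comp (measurable_fst.fst.prodMk measurable_snd)).add measurable_const).add
      ((P.measurable_defect (fun i ↦ (ht i).comp measurable_fst.fst) measurable_fst.snd).add
        (hk'.comp measurable_snd))).pow_const _
  have hstep : ∀ᵐ z ∂graphLaw μ k, ∀ x a, prodDist p DA (Wp p D) x (a, k' a) ≤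
      prodDist p DA (Wp p D) x z + G (z, a) := by
    filter_upwards [ae_graphLaw_isProbabilityMeasure μ k] with z hz x a
    exact P.prodDist_Wp_le hp hDA_tri hD hD_tri hDw t x z (a, k' a)
  refine (Wp_graphLaw_le_of_ae hp k k' hq c hG hstep).trans_eq ?_
  congr 2
  simp only [G, one_div, ENNReal.rpow_inv_rpow (by positivity : p ≠ 0)]
  rw [lintegral_add_left (hcost.add_const ε), lintegral_add_right _ measurable_const,
    lintegral_const, measure_univ, mul_one, lintegral_fst_add_snd_of_mem_Cpl hq hk hk']

end CellPartition

end GraphLaw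

section Approximation

open scoped NNReal BoundedContinuousFunction

lemma edist_coe_nnreal (a b : ℝ≥0) : edist (a : ℝ≥0∞) b = edist a b := rfl

lemma exists_boundedContinuous_lintegral_edist_lt {A : Type*} [TopologicalSpace A] [NormalSpace A]
    [MeasurableSpace A] [BorelSpace A] {μ : Measure A} [μ.WeaklyRegular] {f : A → ℝ≥0∞}
    (hf : Measurable f) (hμf : ∫⁻ a, f a ∂μ ≠ ∞) {δ : ℝ≥0∞} (hδ : δ ≠ 0) :
    ∃ g : A →ᵇ ℝ≥0, ∫⁻ a, edist (g a : ℝ≥0∞) (f a) ∂μ < δ := by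
  obtain ⟨δ', hδ', hδδ'⟩ := exists_between (pos_iff_ne_zero.2 hδ)
  obtain ⟨g, hg, -⟩ := (integrable_toReal_of_lintegral_ne_top hf.aemeasurable hμf
    ).exists_boundedContinuous_lintegral_sub_le hδ'.ne'
  refine ⟨g.nnrealPart, lt_of_le_of_lt ?_ hδδ'⟩
  refine (lintegral_mono_ae ?_).trans hg
  filter_upwards [ae_lt_top hf hμf] with a ha
  lift f a to ℝ≥0 using ha.ne with y
  rw [edist_coe_nnreal, edist_comm]
  simpa [edist_eq_enorm_sub] using Real.lipschitzWith_toNNReal (y : ℝ) (g a)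

namespace CellPartition

variable {A B : Type*} [TopologicalSpace B] {p : ℝ} {DA : A → A → ℝ≥0∞} {κ : B → B → ℝ≥0∞}
  {w : C(B, ℝ≥0)} {ε : ℝ≥0∞}

lemma baseCost_self (P : CellPartition κ w ε) (hp : 0 < p) (hDA : ∀ a, DA a a = 0)
    (t : A → P.ι → ℝ≥0∞) (a : A) : P.baseCost p DA t a a = 0 := by
  simp [baseCost, hDA, hp, WeakPseudoEMetricSpace.edist_self]

variable [TopologicalSpace A]

lemma continuous_baseCost (P : CellPartition κ w ε) (hDA : Continuous (Function.uncurry DA))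
    (g : P.ι → A →ᵇ ℝ≥0) :
    Continuous (Function.uncurry (P.baseCost p DA fun a i ↦ g i a)) := by
  refine (ENNReal.continuous_rpow_const.comp hDA).add <|
    (ENNReal.continuous_const_mul coe_ne_top).comp <| continuous_finsetSum _ fun i _ ↦ ?_
  exact ((g i).continuous.comp continuous_fst).edist ((g i).continuous.comp continuous_snd)

/-- A weight dominating `baseCost` when `w₀` dominates the `p`-th power of the base distance. -/
def baseWeight (P : CellPartition κ w ε) (w₀ : C(A, ℝ≥0)) (g : P.ι → A →ᵇ ℝ≥0) : C(A, ℝ≥0) :=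
  w₀ + ⟨fun a ↦ P.bound * ∑ i, g i a, by fun_prop⟩

lemma baseCost_le (P : CellPartition κ w ε) {w₀ : C(A, ℝ≥0)}
    (hw₀ : ∀ a a', DA a a' ^ p ≤ w₀ a + w₀ a') (g : P.ι → A →ᵇ ℝ≥0) (a a' : A) :
    P.baseCost p DA (fun a i ↦ g i a) a a' ≤ P.baseWeight w₀ g a + P.baseWeight w₀ g a' := by
  calc P.baseCost p DA (fun a i ↦ g i a) a a'
      ≤ w₀ a + w₀ a' + P.bound * ∑ i, ((g i a : ℝ≥0∞) + g i a') := by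
        rw [baseCost]
        gcongr
        · exact hw₀ a a'
        · exact edist_le_add _ _
    _ = _ := by
        simp only [baseWeight, ContinuousMap.add_apply, ContinuousMap.coe_mk,
          Finset.sum_add_distrib, ENNReal.coe_add, ENNReal.coe_mul, ENNReal.ofNNReal_finsetSum]
        ring

end CellPartition

end Approximation

section PathSpace

open scoped NNReal

variable {p : ℝ} {E : Type*} [PseudoMetricSpace E] {k : ℕ}

lemma pathDist_rpow (hp : p ≠ 0) (x y : Fin k → E) :
    pathDist p edist x y ^ p = ∑ t, edist (x t) (y t) ^ p := by
  rw [pathDist, one_div, ENNReal.rpow_inv_rpow hp]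

lemma pathDist_triangle (hp : 1 ≤ p) (x y z : Fin k → E) :
    pathDist p edist x z ≤ pathDist p edist x y + pathDist p edist y z := by
  refine le_trans ?_ (ENNReal.Lp_add_le Finset.univ (fun t ↦ edist (x t) (y t))
    (fun t ↦ edist (y t) (z t)) hp)
  rw [pathDist]
  gcongr
  exact edist_triangle _ _ _

lemma pathDist_self (hp : 0 < p) (x : Fin k → E) : pathDist p edist x x = 0 := by
  simp [pathDist, hp]

lemma pathDist_comm (x y : Fin k → E) : pathDist p edist x y = pathDist p edist y x := by
  simp only [pathDist, edist_comm]

lemma continuous_pathDist : Continuous (Function.uncurry (pathDist p edist (N := k) (X := E))) := by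
  refine ENNReal.continuous_rpow_const.comp <| continuous_finsetSum _ fun t _ ↦
    ENNReal.continuous_rpow_const.comp ?_
  exact ((continuous_apply t).comp continuous_fst).edist ((continuous_apply t).comp continuous_snd)

lemma sum_comp_le_sum {ι κ : Type*} [Fintype ι] [Fintype κ] {e : ι → κ}
    (he : Function.Injective e) (f : κ → ℝ≥0∞) : ∑ i, f (e i) ≤ ∑ j, f j := by
  simpa only [tsum_fintype] using ENNReal.tsum_comp_le_tsum_of_injective he f

lemma pathDist_restr_le (hp : 0 ≤ p) {t : ℕ} (h : t ≤ k) (x y : Fin k → E) :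
    pathDist p edist (restr t h x) (restr t h y) ≤ pathDist p edist x y :=
  ENNReal.rpow_le_rpow
    (sum_comp_le_sum (Fin.castLE_injective h) fun s ↦ edist (x s) (y s) ^ p) (by positivity)

lemma pathDist_tailr_le (hp : 0 ≤ p) {t : ℕ} (h : t ≤ k) (x y : Fin k → E) :
    pathDist p edist (tailr t h x) (tailr t h y) ≤ pathDist p edist x y := by
  have he : Function.Injective fun s : Fin (k - t) ↦ (⟨t + s, by omega⟩ : Fin k) :=
    fun a b hab ↦ by simpa [Fin.ext_iff] using hab
  exact ENNReal.rpow_le_rpow (sum_comp_le_sum he fun s ↦ edist (x s) (y s) ^ p) (by positivity)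

lemma continuous_restr {t : ℕ} (h : t ≤ k) : Continuous (restr (X := E) t h) :=
  continuous_pi fun _ ↦ continuous_apply _

lemma continuous_tailr {t : ℕ} (h : t ≤ k) : Continuous (tailr (X := E) t h) :=
  continuous_pi fun _ ↦ continuous_apply _

/-- The `p`-th power of the distance to a base path `x₀`, as a finite continuous function. -/
def pathMoment (hp : 0 < p) (x₀ : Fin k → E) : C(Fin k → E, ℝ≥0) where
  toFun x := ∑ t, nndist (x₀ t) (x t) ^ p
  continuous_toFun := continuous_finsetSum _ fun t _ ↦
    (NNReal.continuous_rpow_const hp.le).comp (by fun_prop)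

lemma coe_pathMoment (hp : 0 < p) (x₀ x : Fin k → E) :
    (pathMoment hp x₀ x : ℝ≥0∞) = pathDist p edist x₀ x ^ p := by
  simp only [pathMoment, ContinuousMap.coe_mk, pathDist_rpow hp.ne', edist_nndist,
    ENNReal.ofNNReal_finsetSum, ENNReal.coe_rpow_of_nonneg _ hp.le]

lemma pathDist_rpow_le_pathMoment_add (hp : 1 ≤ p) (x₀ x y : Fin k → E) :
    pathDist p edist x y ^ p ≤
      ((2 ^ (p - 1) : ℝ≥0) • pathMoment (zero_lt_one.trans_le hp) x₀) x +
        ((2 ^ (p - 1) : ℝ≥0) • pathMoment (zero_lt_one.trans_le hp) x₀) y := by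
  simp only [ContinuousMap.smul_apply, smul_eq_mul, ENNReal.coe_mul, coe_pathMoment,
    ENNReal.coe_rpow_of_ne_zero two_ne_zero, ENNReal.coe_ofNat, ← mul_add]
  refine le_trans ?_ (ENNReal.rpow_add_le_mul_rpow_add_rpow _ _ hp)
  gcongr
  rw [pathDist_comm x₀ x]
  exact pathDist_triangle hp _ _ _

lemma pathMoment_restr_le (hp : 0 < p) {t : ℕ} (h : t ≤ k) (x₀ x : Fin k → E) :
    pathMoment hp (restr t h x₀) (restr t h x) ≤ pathMoment hp x₀ x := by
  rw [← ENNReal.coe_le_coe, coe_pathMoment, coe_pathMoment]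
  exact ENNReal.rpow_le_rpow (pathDist_restr_le hp.le h x₀ x) hp.le

lemma pathMoment_tailr_le (hp : 0 < p) {t : ℕ} (h : t ≤ k) (x₀ x : Fin k → E) :
    pathMoment hp (tailr t h x₀) (tailr t h x) ≤ pathMoment hp x₀ x := by
  rw [← ENNReal.coe_le_coe, coe_pathMoment, coe_pathMoment]
  exact ENNReal.rpow_le_rpow (pathDist_tailr_le hp.le h x₀ x) hp.le

/-- Functions on path space that grow at most like the `p`-th power of the distance to `x₀`. -/
def HasPowerGrowth (hp : 0 < p) (x₀ : Fin k → E) (f : (Fin k → E) → ℝ≥0) : Prop :=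
  ∃ C : ℝ≥0, ∀ x, f x ≤ C * (1 + pathMoment hp x₀ x)

namespace HasPowerGrowth

variable {hp : 0 < p} {x₀ : Fin k → E} {f f' : (Fin k → E) → ℝ≥0}

lemma of_le (C : ℝ≥0) (hf : ∀ x, f x ≤ C) : HasPowerGrowth hp x₀ f :=
  ⟨C, fun x ↦ (hf x).trans (le_mul_of_one_le_right' le_self_add)⟩

lemma mono (hf' : HasPowerGrowth hp x₀ f') (hf : ∀ x, f x ≤ f' x) : HasPowerGrowth hp x₀ f :=
  hf'.imp fun _ hC x ↦ (hf x).trans (hC x)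

lemma add (hf : HasPowerGrowth hp x₀ f) (hf' : HasPowerGrowth hp x₀ f') :
    HasPowerGrowth hp x₀ (fun x ↦ f x + f' x) := by
  obtain ⟨C, hC⟩ := hf
  obtain ⟨C', hC'⟩ := hf'
  exact ⟨C + C', fun x ↦ (add_le_add (hC x) (hC' x)).trans_eq (add_mul _ _ _).symm⟩

lemma smul_pathMoment (hp : 0 < p) (x₀ : Fin k → E) (c : ℝ≥0) :
    HasPowerGrowth hp x₀ (c • pathMoment hp x₀) :=
  ⟨c, fun _ ↦ mul_le_mul_right le_add_self c⟩

lemma comp_restr {t : ℕ} (h : t ≤ k) {f : (Fin t → E) → ℝ≥0}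
    (hf : HasPowerGrowth hp (restr t h x₀) f) : HasPowerGrowth hp x₀ (f ∘ restr t h) :=
  hf.imp fun _ hC x ↦ (hC _).trans <| by
    gcongr
    exact pathMoment_restr_le hp h x₀ x

lemma comp_tailr {t : ℕ} (h : t ≤ k) {f : (Fin (k - t) → E) → ℝ≥0}
    (hf : HasPowerGrowth hp (tailr t h x₀) f) : HasPowerGrowth hp x₀ (f ∘ tailr t h) :=
  hf.imp fun _ hC x ↦ (hC _).trans <| by
    gcongr
    exact pathMoment_tailr_le hp h x₀ x

end HasPowerGrowth

variable [MeasurableSpace E] [OpensMeasurableSpace E] [SecondCountableTopology E]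

lemma lintegral_pathMoment_ne_top (hp : 1 ≤ p) {μ : Measure (Fin k → E)}
    (hμ : MemPp p (pathDist p edist) μ) (x₀ : Fin k → E) :
    ∫⁻ x, pathMoment (zero_lt_one.trans_le hp) x₀ x ∂μ ≠ ∞ := by
  obtain ⟨_, x₁, hx₁⟩ := hμ
  simp only [← coe_pathMoment (zero_lt_one.trans_le hp)] at hx₁
  have hle x : (pathMoment (zero_lt_one.trans_le hp) x₀ x : ℝ≥0∞) ≤
      ((2 ^ (p - 1) : ℝ≥0) • pathMoment (zero_lt_one.trans_le hp) x₁) x₀ +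
        (2 ^ (p - 1) : ℝ≥0) * pathMoment (zero_lt_one.trans_le hp) x₁ x := by
    rw [coe_pathMoment]
    exact pathDist_rpow_le_pathMoment_add hp x₁ x₀ x
  refine ne_top_of_le_ne_top ?_ (lintegral_mono hle)
  rw [lintegral_add_left measurable_const, lintegral_const, lintegral_const_mul _ (by fun_prop)]
  finiteness

lemma HasPowerGrowth.lintegral_ne_top (hp : 1 ≤ p) {μ : Measure (Fin k → E)}
    (hμ : MemPp p (pathDist p edist) μ) {x₀ : Fin k → E} {f : (Fin k → E) → ℝ≥0}
    (hf : HasPowerGrowth (zero_lt_one.trans_le hp) x₀ f) : ∫⁻ x, f x ∂μ ≠ ∞ := by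
  obtain ⟨C, hC⟩ := hf
  have := hμ.1
  have hmoment := lintegral_pathMoment_ne_top hp hμ x₀
  refine ne_top_of_le_ne_top ?_ (lintegral_mono fun x ↦ ENNReal.coe_le_coe.2 (hC x))
  simp only [ENNReal.coe_mul, ENNReal.coe_add, ENNReal.coe_one]
  rw [lintegral_const_mul _ (by fun_prop), lintegral_add_left measurable_const, lintegral_const]
  finiteness

end PathSpace

section FutureKernel

variable {E : Type*} [MeasurableSpace E] {N t : ℕ}

lemma measurable_restr (h : t ≤ N) : Measurable (restr (X := E) t h) :=
  measurable_pi_lambda _ fun _ ↦ measurable_pi_apply _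

lemma measurable_tailr (h : t ≤ N) : Measurable (tailr (X := E) t h) :=
  measurable_pi_lambda _ fun _ ↦ measurable_pi_apply _

variable [StandardBorelSpace E] [Nonempty E]

/-- The conditional law of the path after time `t` given its first `t` coordinates. -/
def futureKernel (h : t ≤ N) (ν : Measure (Fin N → E)) : Kernel (Fin t → E) (Fin (N - t) → E) :=
  condK (ν.map fun y ↦ (restr t h y, tailr t h y))

lemma futureKernel_eq_condKernel (h : t ≤ N) (ν : Measure (Fin N → E)) [IsFiniteMeasure ν] :
    futureKernel h ν = (ν.map fun y ↦ (restr t h y, tailr t h y)).condKernel :=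
  dif_pos (inferInstanceAs (IsFiniteMeasure (ν.map _)))

instance isMarkovKernel_futureKernel (h : t ≤ N) (ν : Measure (Fin N → E)) [IsFiniteMeasure ν] :
    IsMarkovKernel (futureKernel h ν) := by
  rw [futureKernel_eq_condKernel]
  infer_instance

lemma map_restr_compProd_futureKernel (h : t ≤ N) (ν : Measure (Fin N → E)) [IsFiniteMeasure ν] :
    ν.map (restr t h) ⊗ₘ futureKernel h ν = ν.map fun y ↦ (restr t h y, tailr t h y) := by
  rw [futureKernel_eq_condKernel, ← Measure.fst_map_prodMk (measurable_tailr h),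
    Measure.disintegrate]

lemma lintegral_restr_tailr (h : t ≤ N) (ν : Measure (Fin N → E)) [IsFiniteMeasure ν]
    {f : (Fin t → E) × (Fin (N - t) → E) → ℝ≥0∞} (hf : Measurable f) :
    ∫⁻ x, f (restr t h x, tailr t h x) ∂ν =
      ∫⁻ a, ∫⁻ b, f (a, b) ∂futureKernel h ν a ∂ν.map (restr t h) := by
  rw [← Measure.lintegral_compProd hf, map_restr_compProd_futureKernel,
    lintegral_map hf ((measurable_restr h).prodMk (measurable_tailr h))]

end FutureKernel

lemma infoMap_eq_graphLaw {E : Type*} [MeasurableSpace E] [TopologicalSpace E] [PolishSpace E]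
    [BorelSpace E] [Nonempty E] {N t : ℕ} (h : t ≤ N) (ν : Measure (Fin N → E)) :
    infoMap N t h ν = graphLaw (ν.map (restr t h)) (futureKernel h ν) :=
  (Measure.map_map (measurable_graph _) (measurable_restr h)).symm

section Stopping

open scoped NNReal

variable {E : Type*} {N t : ℕ}

/-- The rule that stops at the `t`-th date if the first `t` coordinates lie in `A`, and at the last
date otherwise; dates are counted from `0` in `Fin N`. -/
def twoDateRule (ht : 0 < t) (h : t ≤ N) (A : Set (Fin t → E)) [DecidablePred (· ∈ A)]
    (x : Fin N → E) : Fin N :=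
  if restr t h x ∈ A then ⟨t - 1, by omega⟩ else ⟨N - 1, by omega⟩

/-- The process that pays `G` of the first `t` coordinates at the `t`-th date, `F` of the remaining
ones at the last date, and nothing otherwise. -/
def twoDateReward (h : t ≤ N) (G : (Fin t → E) → ℝ≥0) (F : (Fin (N - t) → E) → ℝ≥0) (s : Fin N)
    (x : Fin N → E) : ℝ≥0 :=
  if s + 1 = t then G (restr t h x) else if s + 1 = N then F (tailr t h x) else 0

section Reward

variable {G : (Fin t → E) → ℝ≥0} {F : (Fin (N - t) → E) → ℝ≥0}

lemma twoDateReward_le_add (h : t ≤ N) (s : Fin N) (x : Fin N → E) :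
    twoDateReward h G F s x ≤ G (restr t h x) + F (tailr t h x) := by
  rw [twoDateReward]
  split_ifs
  exacts [le_self_add, le_add_self, zero_le]

lemma twoDateReward_twoDateRule (ht : 0 < t) (h : t < N) (A : Set (Fin t → E))
    [DecidablePred (· ∈ A)] (x : Fin N → E) :
    twoDateReward h.le G F (twoDateRule ht h.le A x) x =
      if restr t h.le x ∈ A then G (restr t h.le x) else F (tailr t h.le x) := by
  have hpred : t - 1 + 1 = t := by omega
  have hlast : N - 1 + 1 = N := by omega
  by_cases hx : restr t h.le x ∈ A <;>
    simp [twoDateReward, twoDateRule, hx, hpred, hlast, h.ne']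

lemma adaptedProc_twoDateReward (h : t ≤ N) :
    AdaptedProc fun s x ↦ -(twoDateReward h G F s x : ℝ) := by
  intro s x y hxy
  have hrestr (hs : s.1 + 1 = t) : restr t h x = restr t h y :=
    funext fun i ↦ hxy _ (Fin.le_def.2 (by simp; omega))
  have htailr (hs : s.1 + 1 = N) : tailr t h x = tailr t h y :=
    funext fun i ↦ hxy _ (Fin.le_def.2 (by simp; omega))
  simp only [twoDateReward]
  split_ifs with hs hs'
  · rw [hrestr hs]
  · rw [htailr hs']
  · rfl

end Reward

variable [MeasurableSpace E]

lemma measurableSet_comap_restr {t' : ℕ} (h : t ≤ t') (h' : t' ≤ N) {A : Set (Fin t → E)}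
    (hA : MeasurableSet A) :
    MeasurableSet[MeasurableSpace.comap (restr (X := E) t' h') inferInstance]
      (restr t (h.trans h') ⁻¹' A) :=
  ⟨restr t h ⁻¹' A, measurable_restr h hA, rfl⟩

lemma IsStopTime.measurable {τ : (Fin N → E) → Fin N} (hτ : IsStopTime τ) : Measurable τ :=
  measurable_to_countable' fun s ↦ (measurable_restr s.2).comap_le _ (hτ s)

lemma IsStopTime.exists_preimage_restr {τ : (Fin N → E) → Fin N} (hτ : IsStopTime τ)
    (h : t ≤ N) : ∃ A : Set (Fin t → E), MeasurableSet A ∧ ∀ x, restr t h x ∈ A ↔ τ x + 1 ≤ t := by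
  have hlt : MeasurableSet[MeasurableSpace.comap (restr (X := E) t h) inferInstance]
      (⋃ s : Fin N, ⋃ _ : s + 1 ≤ t, {x | τ x = s}) := by
    refine .iUnion fun s ↦ .iUnion fun hs ↦ ?_
    obtain ⟨A, hA, hAs⟩ := hτ s
    rw [← hAs]
    exact measurableSet_comap_restr hs h hA
  obtain ⟨A, hA, hAx⟩ := hlt
  exact ⟨A, hA, fun x ↦ by simpa using Set.ext_iff.1 hAx x⟩

lemma isStopTime_twoDateRule (ht : 0 < t) (h : t ≤ N) {A : Set (Fin t → E)}
    [DecidablePred (· ∈ A)] (hA : MeasurableSet A) : IsStopTime (twoDateRule ht h A) := by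
  intro s
  by_cases hs : t ≤ s + 1
  · have hA' : Measurable fun a : Fin t → E ↦
        if a ∈ A then (⟨t - 1, by omega⟩ : Fin N) else ⟨N - 1, by omega⟩ :=
      .ite hA measurable_const measurable_const
    exact measurableSet_comap_restr hs s.2 (hA' (measurableSet_singleton s))
  · convert MeasurableSet.empty
    refine Set.eq_empty_of_forall_notMem fun x (hx : twoDateRule ht h A x = s) ↦ hs ?_
    rw [← hx, twoDateRule]
    split_ifs <;> simp only [] <;> omega

section Reward

variable {G : (Fin t → E) → ℝ≥0} {F : (Fin (N - t) → E) → ℝ≥0}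

lemma measurable_twoDateReward (h : t ≤ N) (hG : Measurable G) (hF : Measurable F) (s : Fin N) :
    Measurable (twoDateReward h G F s) := by
  unfold twoDateReward
  split_ifs
  exacts [hG.comp (measurable_restr h), hF.comp (measurable_tailr h), measurable_const]

variable [StandardBorelSpace E] [Nonempty E] (ν : Measure (Fin N → E)) [IsFiniteMeasure ν]

lemma lintegral_ite_restr_tailr (h : t ≤ N) (hG : Measurable G) (hF : Measurable F)
    {A : Set (Fin t → E)} [DecidablePred (· ∈ A)] (hA : MeasurableSet A) :
    ∫⁻ x, (if restr t h x ∈ A then G (restr t h x) else F (tailr t h x) : ℝ≥0) ∂ν =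
      ∫⁻ a, (if a ∈ A then (G a : ℝ≥0∞) else ∫⁻ b, F b ∂futureKernel h ν a)
        ∂ν.map (restr t h) := by
  have hmeas : Measurable fun z : (Fin t → E) × (Fin (N - t) → E) ↦
      ((if z.1 ∈ A then G z.1 else F z.2 : ℝ≥0) : ℝ≥0∞) :=
    (Measurable.ite (measurable_fst hA) (by fun_prop) (by fun_prop)).coe_nnreal_ennreal
  rw [lintegral_restr_tailr h ν hmeas]
  congr 1 with a
  split_ifs <;> simp

theorem isGreatest_lintegral_twoDateReward (ht : 0 < t) (h : t < N) (hG : Measurable G)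
    (hF : Measurable F) :
    IsGreatest (Set.range fun τ : {τ : (Fin N → E) → Fin N // IsStopTime τ} ↦
        ∫⁻ x, twoDateReward h.le G F (τ.1 x) x ∂ν)
      (∫⁻ a, max (G a : ℝ≥0∞) (∫⁻ b, F b ∂futureKernel h.le ν a) ∂ν.map (restr t h.le)) := by
  classical
  constructor
  · obtain ⟨A, hA, hAG⟩ : ∃ A : Set (Fin t → E), MeasurableSet A ∧
        ∀ a, a ∈ A ↔ ∫⁻ b, F b ∂futureKernel h.le ν a ≤ G a :=
      ⟨_, measurableSet_le hF.coe_nnreal_ennreal.lintegral_kernel hG.coe_nnreal_ennreal,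
        fun _ ↦ Iff.rfl⟩
    refine ⟨⟨_, isStopTime_twoDateRule ht h.le hA⟩, ?_⟩
    simp only [twoDateReward_twoDateRule ht h A]
    rw [lintegral_ite_restr_tailr ν h.le hG hF hA]
    simp only [hAG, max_def']
  · rintro _ ⟨τ, rfl⟩
    obtain ⟨A, hA, hAτ⟩ := τ.2.exists_preimage_restr h.le
    calc ∫⁻ x, twoDateReward h.le G F (τ.1 x) x ∂ν
        ≤ ∫⁻ x, (if restr t h.le x ∈ A then G (restr t h.le x)
            else F (tailr t h.le x) : ℝ≥0) ∂ν := by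
          gcongr with x
          simp only [hAτ, twoDateReward]
          split_ifs <;> first | rfl | exact zero_le | omega
      _ ≤ _ := by
          rw [lintegral_ite_restr_tailr ν h.le hG hF hA]
          gcongr with a
          split_ifs
          exacts [le_max_left _ _, le_max_right _ _]

end Reward

lemma stopVal_neg_of_isGreatest {R : Fin N → (Fin N → E) → ℝ≥0} (hR : ∀ s, Measurable (R s))
    {ν : Measure (Fin N → E)} {v : ℝ≥0∞} (hv_top : v ≠ ∞)
    (hv : IsGreatest (Set.range fun τ : {τ : (Fin N → E) → Fin N // IsStopTime τ} ↦
      ∫⁻ x, R (τ.1 x) x ∂ν) v) :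
    stopVal (fun s x ↦ -(R s x : ℝ)) ν = -v.toReal := by
  have hint (τ : {τ : (Fin N → E) → Fin N // IsStopTime τ}) :
      ∫ x, -(R (τ.1 x) x : ℝ) ∂ν = -(∫⁻ x, R (τ.1 x) x ∂ν).toReal := by
    have hRτ : Measurable fun x ↦ R (τ.1 x) x :=
      (measurable_from_prod_countable_right (f := fun z ↦ R z.1 z.2) hR).comp
        (τ.2.measurable.prodMk measurable_id)
    rw [integral_neg, ← integral_toReal hRτ.coe_nnreal_ennreal.aemeasurable
      (.of_forall fun _ ↦ coe_lt_top)]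
    rfl
  simp only [stopVal, hint]
  refine IsLeast.csInf_eq ⟨?_, ?_⟩
  · obtain ⟨τ, hτ⟩ := hv.1
    exact ⟨τ, by rw [← hτ]⟩
  · rintro _ ⟨τ, rfl⟩
    exact neg_le_neg (ENNReal.toReal_mono hv_top (hv.2 ⟨τ, rfl⟩))

end Stopping

section StopSpace

open scoped NNReal

variable {p : ℝ} {E : Type*} [PseudoMetricSpace E] {N t : ℕ}

lemma aCp_twoDateReward (hp : 0 < p) (h : t ≤ N) {G : C(Fin t → E, ℝ≥0)}
    {F : C(Fin (N - t) → E, ℝ≥0)} {x₀ : Fin N → E}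
    (hG : HasPowerGrowth hp (restr t h x₀) G) (hF : HasPowerGrowth hp (tailr t h x₀) F) :
    ACp p edist fun s x ↦ -(twoDateReward h G F s x : ℝ) := by
  refine ⟨fun s ↦ ?_, adaptedProc_twoDateReward h, ?_⟩
  · refine (NNReal.continuous_coe.comp ?_).neg
    unfold twoDateReward
    split_ifs
    exacts [G.continuous.comp (continuous_restr h), F.continuous.comp (continuous_tailr h),
      continuous_const]
  · obtain ⟨C, hC⟩ := (hG.comp_restr h).add (hF.comp_tailr h)
    refine ⟨C, x₀, fun s x ↦ ?_⟩
    rw [abs_neg, NNReal.abs_eq, ← coe_pathMoment hp, coe_toReal]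
    exact_mod_cast (twoDateReward_le_add h s x).trans (hC x)

variable [MeasurableSpace E]

/-- The laws on path space with finite `p`-th moment, with the optimal stopping topology. -/
abbrev StopSpace (p : ℝ) (N : ℕ) (E : Type*) [PseudoMetricSpace E] [MeasurableSpace E] : Type _ :=
  {μ : Measure (Fin N → E) // MemPp p (pathDist p edist) μ}

instance : TopologicalSpace (StopSpace p N E) :=
  .induced Subtype.val (stopTopWp p edist N)

instance (ν : StopSpace p N E) : IsProbabilityMeasure ν.1 := ν.2.1

lemma StopSpace.continuous_stopVal {L : Fin N → (Fin N → E) → ℝ} (hL : ACp p edist L) :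
    Continuous fun ν : StopSpace p N E ↦ stopVal L ν.1 := by
  rw [continuous_iff_le_induced, ← Function.comp_def (stopVal L), ← induced_compose]
  exact induced_mono (iInf_le
    (fun L : {L // ACp p edist L} ↦ TopologicalSpace.induced (stopVal L.1) inferInstance) ⟨L, hL⟩)

variable [PolishSpace E] [BorelSpace E]

namespace StopSpace

lemma lintegral_restr_ne_top (hp : 1 ≤ p) (h : t ≤ N) {G : C(Fin t → E, ℝ≥0)} {x₀ : Fin N → E}
    (hG : HasPowerGrowth (zero_lt_one.trans_le hp) (restr t h x₀) G) (ν : StopSpace p N E) :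
    ∫⁻ a, G a ∂ν.1.map (restr t h) ≠ ∞ := by
  rw [lintegral_map (by fun_prop) (measurable_restr h)]
  exact (hG.comp_restr h).lintegral_ne_top hp ν.2

variable [Nonempty E]

lemma lintegral_futureKernel_ne_top (hp : 1 ≤ p) (h : t ≤ N) {F : C(Fin (N - t) → E, ℝ≥0)}
    {x₀ : Fin N → E} (hF : HasPowerGrowth (zero_lt_one.trans_le hp) (tailr t h x₀) F)
    (ν : StopSpace p N E) :
    ∫⁻ a, ∫⁻ b, F b ∂futureKernel h ν.1 a ∂ν.1.map (restr t h) ≠ ∞ := by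
  rw [← lintegral_restr_tailr h ν.1 (f := fun z ↦ F z.2) (by fun_prop)]
  exact (hF.comp_tailr h).lintegral_ne_top hp ν.2

theorem continuous_lintegral_max (hp : 1 ≤ p) (ht : 0 < t) (h : t < N) {G : C(Fin t → E, ℝ≥0)}
    {F : C(Fin (N - t) → E, ℝ≥0)} {x₀ : Fin N → E}
    (hG : HasPowerGrowth (zero_lt_one.trans_le hp) (restr t h.le x₀) G)
    (hF : HasPowerGrowth (zero_lt_one.trans_le hp) (tailr t h.le x₀) F) :
    Continuous fun ν : StopSpace p N E ↦
      ∫⁻ a, max (G a : ℝ≥0∞) (∫⁻ b, F b ∂futureKernel h.le ν.1 a) ∂ν.1.map (restr t h.le) := by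
  have hGm := G.continuous.measurable
  have hFm := F.continuous.measurable
  have hval (ν : StopSpace p N E) :
      ∫⁻ a, max (G a : ℝ≥0∞) (∫⁻ b, F b ∂futureKernel h.le ν.1 a) ∂ν.1.map (restr t h.le) =
        ENNReal.ofReal (-stopVal (fun s x ↦ -(twoDateReward h.le G F s x : ℝ)) ν.1) := by
    have htop : ∫⁻ a, max (G a : ℝ≥0∞) (∫⁻ b, F b ∂futureKernel h.le ν.1 a)
        ∂ν.1.map (restr t h.le) ≠ ∞ := by
      refine ne_top_of_le_ne_top (add_ne_top.2 ⟨lintegral_restr_ne_top hp h.le hG ν,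
        lintegral_futureKernel_ne_top hp h.le hF ν⟩) ?_
      rw [← lintegral_add_left (by fun_prop)]
      exact lintegral_mono fun a ↦ max_le le_self_add le_add_self
    rw [stopVal_neg_of_isGreatest (measurable_twoDateReward h.le hGm hFm) htop
      (isGreatest_lintegral_twoDateReward ν.1 ht h hGm hFm), neg_neg, ENNReal.ofReal_toReal htop]
  simp only [hval]
  exact ENNReal.continuous_ofReal.comp (continuous_stopVal (aCp_twoDateReward _ h.le hG hF)).neg

lemma continuous_lintegral_restr (hp : 1 ≤ p) (ht : 0 < t) (h : t < N) {G : C(Fin t → E, ℝ≥0)}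
    {x₀ : Fin N → E} (hG : HasPowerGrowth (zero_lt_one.trans_le hp) (restr t h.le x₀) G) :
    Continuous fun ν : StopSpace p N E ↦ ∫⁻ a, G a ∂ν.1.map (restr t h.le) := by
  simpa using continuous_lintegral_max hp ht h hG (F := 0) (.of_le 0 fun _ ↦ le_rfl)

lemma continuous_lintegral_futureKernel (hp : 1 ≤ p) (ht : 0 < t) (h : t < N)
    {F : C(Fin (N - t) → E, ℝ≥0)} {x₀ : Fin N → E}
    (hF : HasPowerGrowth (zero_lt_one.trans_le hp) (tailr t h.le x₀) F) :
    Continuous fun ν : StopSpace p N E ↦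
      ∫⁻ a, ∫⁻ b, F b ∂futureKernel h.le ν.1 a ∂ν.1.map (restr t h.le) := by
  simpa using continuous_lintegral_max hp ht h (G := 0) (.of_le 0 fun _ ↦ le_rfl) hF

theorem continuous_lintegral_edist (hp : 1 ≤ p) (ht : 0 < t) (h : t < N) {G : C(Fin t → E, ℝ≥0)}
    {F : C(Fin (N - t) → E, ℝ≥0)} {x₀ : Fin N → E}
    (hG : HasPowerGrowth (zero_lt_one.trans_le hp) (restr t h.le x₀) G)
    (hF : HasPowerGrowth (zero_lt_one.trans_le hp) (tailr t h.le x₀) F) :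
    Continuous fun ν : StopSpace p N E ↦
      ∫⁻ a, edist (G a : ℝ≥0∞) (∫⁻ b, F b ∂futureKernel h.le ν.1 a) ∂ν.1.map (restr t h.le) := by
  have hmax := continuous_lintegral_max hp ht h hG hF
  have hsum := (continuous_lintegral_restr hp ht h hG).add
    (continuous_lintegral_futureKernel hp ht h hF)
  have hsum_ne_top (ν : StopSpace p N E) : ∫⁻ a, (G a : ℝ≥0∞) ∂ν.1.map (restr t h.le) +
      ∫⁻ a, ∫⁻ b, F b ∂futureKernel h.le ν.1 a ∂ν.1.map (restr t h.le) ≠ ∞ :=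
    add_ne_top.2 ⟨lintegral_restr_ne_top hp h.le hG ν, lintegral_futureKernel_ne_top hp h.le hF ν⟩
  simp only [fun ν : StopSpace p N E ↦ lintegral_edist_eq (f := fun a ↦ (G a : ℝ≥0∞))
    (by fun_prop) (.lintegral_kernel (κ := futureKernel h.le ν.1) (by fun_prop)) (hsum_ne_top ν)]
  exact continuous_iff_continuousAt.2 fun ν ↦ ENNReal.Tendsto.sub
    ((ENNReal.continuous_const_mul ofNat_ne_top).comp hmax).continuousAt hsum.continuousAt
    (.inr (hsum_ne_top ν))

end StopSpace

end StopSpace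

section DefectContinuity

open scoped NNReal BoundedContinuousFunction

namespace CellPartition

variable {A B : Type*} [MeasurableSpace A] [TopologicalSpace B] [MeasurableSpace B]
  [OpensMeasurableSpace B] {κ : B → B → ℝ≥0∞} {w : C(B, ℝ≥0)} {ε : ℝ≥0∞}

lemma lintegral_defect (P : CellPartition κ w ε) {t : A → P.ι → ℝ≥0∞}
    (ht : ∀ i, Measurable fun a ↦ t a i) (k : Kernel A B) (μ : Measure A) :
    ∫⁻ a, P.defect (t a) (k a) ∂μ =
      P.bound * ∑ i, ∫⁻ a, edist (t a i) (∫⁻ x, P.bump i x ∂k a) ∂μ +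
        ∫⁻ a, ∫⁻ x, P.rest x * w x ∂k a ∂μ := by
  have hbump i : Measurable fun a ↦ edist (t a i) (∫⁻ x, P.bump i x ∂k a) :=
    measurable_edist_ennreal (ht i) (Measurable.lintegral_kernel (by fun_prop))
  simp only [defect]
  rw [lintegral_add_right _ (Measurable.lintegral_kernel (by fun_prop)),
    lintegral_const_mul _ (Finset.measurable_fun_sum _ fun i _ ↦ hbump i),
    lintegral_finsetSum _ fun i _ ↦ hbump i]

theorem exists_lintegral_defect_lt [NormalSpace B] [ParacompactSpace B] [SecondCountableTopology B]
    [TopologicalSpace A] [NormalSpace A] [BorelSpace A] (hε : ε ≠ 0)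
    (hκ : Continuous (Function.uncurry κ)) (hκ_self : ∀ x, κ x x = 0) {μ : Measure A}
    [IsFiniteMeasure μ] [μ.WeaklyRegular] {k : Kernel A B} [IsFiniteKernel k]
    (hw : ∫⁻ a, ∫⁻ x, w x ∂k a ∂μ ≠ ∞) :
    ∃ (P : CellPartition κ w ε) (g : P.ι → A →ᵇ ℝ≥0),
      ∫⁻ a, P.defect (fun i ↦ g i a) (k a) ∂μ < ε := by
  have hbind {f : B → ℝ≥0∞} (hf : Measurable f) :
      ∫⁻ x, f x ∂μ.bind k = ∫⁻ a, ∫⁻ x, f x ∂k a ∂μ :=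
    Measure.lintegral_bind k.measurable.aemeasurable hf.aemeasurable
  have hε' : ε / 2 ≠ 0 := ENNReal.div_ne_zero.2 ⟨hε, ofNat_ne_top⟩
  rw [← hbind (by fun_prop)] at hw
  obtain ⟨P, hP⟩ := exists_lintegral_rest_lt hε hκ hκ_self hw hε'
  rw [hbind (by fun_prop)] at hP
  obtain ⟨δ, hδ, hδε⟩ := ENNReal.exists_nnreal_pos_mul_lt
    (a := P.bound * Fintype.card P.ι) (by finiteness) hε'
  have hmass i : ∫⁻ a, ∫⁻ x, P.bump i x ∂k a ∂μ ≠ ∞ := by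
    rw [← hbind (by fun_prop)]
    refine ne_top_of_le_ne_top (measure_ne_top (μ.bind k) .univ) ?_
    exact (lintegral_mono fun x ↦ ENNReal.coe_le_one_iff.2 (P.bump_le_one i x)).trans_eq
      lintegral_one
  choose g hg using fun i ↦ exists_boundedContinuous_lintegral_edist_lt
    (Measurable.lintegral_kernel (by fun_prop)) (hmass i) (ENNReal.coe_ne_zero.2 hδ.ne')
  refine ⟨P, g, ?_⟩
  calc ∫⁻ a, P.defect (fun i ↦ g i a) (k a) ∂μ
      = P.bound * ∑ i, ∫⁻ a, edist (g i a : ℝ≥0∞) (∫⁻ x, P.bump i x ∂k a) ∂μ +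
          ∫⁻ a, ∫⁻ x, P.rest x * w x ∂k a ∂μ := P.lintegral_defect (fun i ↦ by fun_prop) k μ
    _ ≤ P.bound * ∑ _ : P.ι, (δ : ℝ≥0∞) + ∫⁻ a, ∫⁻ x, P.rest x * w x ∂k a ∂μ := by
        gcongr with i
        exact (hg i).le
    _ = δ * (P.bound * Fintype.card P.ι) + ∫⁻ a, ∫⁻ x, P.rest x * w x ∂k a ∂μ := by
        rw [Finset.sum_const, Finset.card_univ, nsmul_eq_mul]
        ring
    _ < ε / 2 + ε / 2 := ENNReal.add_lt_add hδε hP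
    _ = ε := ENNReal.add_halves ε

end CellPartition

section PathSpace

variable {p : ℝ} {E : Type*} [PseudoMetricSpace E] {k : ℕ} {hp : 0 < p} {x₀ : Fin k → E}

lemma HasPowerGrowth.rest_mul {w : C(Fin k → E, ℝ≥0)} {κ : (Fin k → E) → (Fin k → E) → ℝ≥0∞}
    {ε : ℝ≥0∞} (hw : HasPowerGrowth hp x₀ w) (P : CellPartition κ w ε) :
    HasPowerGrowth hp x₀ (P.rest * w) :=
  hw.mono fun x ↦ mul_le_of_le_one_left' (P.rest_le_one x)

lemma HasPowerGrowth.baseWeight {B : Type*} [TopologicalSpace B] {w₀ : C(Fin k → E, ℝ≥0)}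
    {w : C(B, ℝ≥0)} {κ : B → B → ℝ≥0∞} {ε : ℝ≥0∞} (hw₀ : HasPowerGrowth hp x₀ w₀)
    (P : CellPartition κ w ε) (g : P.ι → (Fin k → E) →ᵇ ℝ≥0) :
    HasPowerGrowth hp x₀ (P.baseWeight w₀ g) :=
  hw₀.add <| .of_le (P.bound * ∑ i, nndist (g i) 0) fun x ↦
    mul_le_mul_right (Finset.sum_le_sum fun i _ ↦
      BoundedContinuousFunction.NNReal.upper_bound (g i) x) _

end PathSpace

namespace StopSpace

variable {p : ℝ} {E : Type*} [PseudoMetricSpace E] [MeasurableSpace E] [PolishSpace E]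
  [BorelSpace E] [Nonempty E] {N t : ℕ} {x₀ : Fin N → E} {ε : ℝ≥0∞}

lemma continuous_defect_map_restr (hp : 1 ≤ p) (ht : 0 < t) (h : t < N) {w : C(Fin t → E, ℝ≥0)}
    (hw : HasPowerGrowth (zero_lt_one.trans_le hp) (restr t h.le x₀) w)
    {κ : (Fin t → E) → (Fin t → E) → ℝ≥0∞} (P : CellPartition κ w ε) {s : P.ι → ℝ≥0∞}
    (hs : ∀ i, s i ≠ ∞) :
    Continuous fun ν : StopSpace p N E ↦ P.defect s (ν.1.map (restr t h.le)) := by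
  have hbump i := continuous_lintegral_restr hp ht h (G := P.bump i) (x₀ := x₀)
    (.of_le 1 (P.bump_le_one i))
  have hrest := continuous_lintegral_restr hp ht h (G := P.rest * w) (hw.rest_mul P)
  refine ((ENNReal.continuous_const_mul coe_ne_top).comp <| continuous_finsetSum _ fun i _ ↦
    (continuous_edist_ennreal (hs i)).comp (hbump i)).add ?_
  simpa only [ContinuousMap.mul_apply, ENNReal.coe_mul] using hrest

lemma continuous_lintegral_defect_futureKernel (hp : 1 ≤ p) (ht : 0 < t) (h : t < N)
    {w : C(Fin (N - t) → E, ℝ≥0)}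
    (hw : HasPowerGrowth (zero_lt_one.trans_le hp) (tailr t h.le x₀) w)
    {κ : (Fin (N - t) → E) → (Fin (N - t) → E) → ℝ≥0∞} (P : CellPartition κ w ε)
    (g : P.ι → (Fin t → E) →ᵇ ℝ≥0) :
    Continuous fun ν : StopSpace p N E ↦
      ∫⁻ a, P.defect (fun i ↦ g i a) (futureKernel h.le ν.1 a) ∂ν.1.map (restr t h.le) := by
  have hbump i := continuous_lintegral_edist hp ht h (G := (g i).toContinuousMap) (F := P.bump i)
    (x₀ := x₀) (.of_le (nndist (g i) 0) (BoundedContinuousFunction.NNReal.upper_bound (g i)))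
    (.of_le 1 (P.bump_le_one i))
  have hrest := continuous_lintegral_futureKernel hp ht h (F := P.rest * w) (hw.rest_mul P)
  simp only [P.lintegral_defect (t := fun a i ↦ g i a) fun i ↦ by fun_prop]
  refine ((ENNReal.continuous_const_mul coe_ne_top).comp <|
    continuous_finsetSum _ fun i _ ↦ hbump i).add ?_
  simpa only [ContinuousMap.mul_apply, ENNReal.coe_mul] using hrest

end StopSpace

end DefectContinuity

section InfoMap

open scoped NNReal BoundedContinuousFunction

namespace CellPartition

variable {A B : Type*} [TopologicalSpace A] [PolishSpace A] [MeasurableSpace A] [BorelSpace A]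
  [Nonempty A] [TopologicalSpace B] [PolishSpace B] [MeasurableSpace B] [BorelSpace B] [Nonempty B]
  {p : ℝ} {DA : A → A → ℝ≥0∞} {D : B → B → ℝ≥0∞} {w₀ : C(A, ℝ≥0)} {w : C(B, ℝ≥0)} {ε : ℝ≥0∞}

theorem Wp_graphLaw_le_of_defect_le (hp : 1 ≤ p) (hDA : Continuous (Function.uncurry DA))
    (hDA_tri : ∀ x y z, DA x z ≤ DA x y + DA y z) (hDA_w₀ : ∀ x y, DA x y ^ p ≤ w₀ x + w₀ y)
    (hD : Continuous (Function.uncurry D)) (hD_tri : ∀ x y z, D x z ≤ D x y + D y z)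
    (hD_w : ∀ x y, D x y ^ p ≤ w x + w y) (P : CellPartition (fun x y ↦ D x y ^ p) w ε)
    (g : P.ι → A →ᵇ ℝ≥0)
    (Q : CellPartition (P.baseCost p DA fun a i ↦ g i a) (P.baseWeight w₀ g) ε) (s : Q.ι → ℝ≥0∞)
    {μ ν : Measure A} [IsProbabilityMeasure μ] [IsProbabilityMeasure ν] (k k' : Kernel A B)
    [IsMarkovKernel k] [IsMarkovKernel k'] (hμ : Q.defect s μ ≤ ε) (hν : Q.defect s ν ≤ ε)
    (hk : ∫⁻ a, P.defect (fun i ↦ g i a) (k a) ∂μ ≤ ε)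
    (hk' : ∫⁻ a, P.defect (fun i ↦ g i a) (k' a) ∂ν ≤ ε) (c : Measure (A × Measure B)) :
    Wp p (prodDist p DA (Wp p D)) c (graphLaw ν k') ≤
      Wp p (prodDist p DA (Wp p D)) c (graphLaw μ k) + (6 * ε) ^ (1 / p) := by
  obtain ⟨q, hq, hqε⟩ := Q.exists_mem_Cpl_lintegral_le (P.baseCost_le hDA_w₀ g) μ ν s s
  simp only [WeakPseudoEMetricSpace.edist_self, Finset.sum_const_zero, mul_zero, add_zero] at hqε
  refine (P.Wp_graphLaw_le hp hDA.measurable hDA_tri hD.measurable hD_tri hD_w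
    (t := fun a i ↦ g i a) (fun i ↦ by fun_prop) k k' hq c).trans ?_
  gcongr
  calc _ ≤ ε + (ε + ε) + ε + (ε + ε) := by
        gcongr
        exact hqε.trans (by gcongr)
    _ = 6 * ε := by ring

end CellPartition

namespace StopSpace

variable {p : ℝ} {E : Type*} [PseudoMetricSpace E] [MeasurableSpace E] [PolishSpace E]
  [BorelSpace E] [Nonempty E] {N t : ℕ} {ε : ℝ≥0∞}

theorem eventually_Wp_infoMap_le (hp : 1 ≤ p) (ht : 0 < t) (h : t < N) (hε : ε ≠ 0)
    (μ : StopSpace p N E) :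
    let D := Wp p (prodDist p (pathDist p edist) (Wp p (pathDist p edist)))
    ∀ᶠ ν : StopSpace p N E in 𝓝 μ, ∀ c,
      D c (infoMap N t h.le ν.1) ≤ D c (infoMap N t h.le μ.1) + (6 * ε) ^ (1 / p) := by
  have hp₀ := zero_lt_one.trans_le hp
  let x₀ : Fin N → E := Classical.arbitrary _
  let w : C(Fin (N - t) → E, ℝ≥0) := (2 ^ (p - 1) : ℝ≥0) • pathMoment hp₀ (tailr t h.le x₀)
  let w₀ : C(Fin t → E, ℝ≥0) := (2 ^ (p - 1) : ℝ≥0) • pathMoment hp₀ (restr t h.le x₀)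
  have hw : HasPowerGrowth hp₀ (tailr t h.le x₀) w := .smul_pathMoment _ _ _
  have hw₀ : HasPowerGrowth hp₀ (restr t h.le x₀) w₀ := .smul_pathMoment _ _ _
  have := Measure.isProbabilityMeasure_map (μ := μ.1) (measurable_restr h.le).aemeasurable
  obtain ⟨P, g, hk⟩ := CellPartition.exists_lintegral_defect_lt
    (κ := fun x y ↦ pathDist p edist x y ^ p) (w := w)
    (μ := μ.1.map (restr t h.le)) (k := futureKernel h.le μ.1) hε
    (ENNReal.continuous_rpow_const.comp continuous_pathDist)
    (fun x ↦ by rw [pathDist_self hp₀, ENNReal.zero_rpow_of_pos hp₀])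
    (lintegral_futureKernel_ne_top hp h.le hw μ)
  have hv := hw₀.baseWeight P g
  obtain ⟨Q, hQ⟩ := CellPartition.exists_lintegral_rest_lt (w := P.baseWeight w₀ g)
    (m := μ.1.map (restr t h.le)) hε
    (P.continuous_baseCost (p := p) (DA := pathDist p edist) continuous_pathDist g)
    (P.baseCost_self hp₀ (pathDist_self hp₀) _) (lintegral_restr_ne_top hp h.le hv μ) hε
  rw [← Q.defect_lintegral_bump] at hQ
  have hs i : ∫⁻ a, Q.bump i a ∂μ.1.map (restr t h.le) ≠ ∞ :=
    lintegral_restr_ne_top hp h.le (x₀ := x₀) (.of_le 1 (Q.bump_le_one i)) μ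
  filter_upwards
    [(continuous_defect_map_restr hp ht h hv Q hs).continuousAt.eventually_lt_const hQ,
    (continuous_lintegral_defect_futureKernel hp ht h hw P g).continuousAt.eventually_lt_const hk]
    with ν hν hk' c
  have := Measure.isProbabilityMeasure_map (μ := ν.1) (measurable_restr h.le).aemeasurable
  simp only [infoMap_eq_graphLaw]
  exact P.Wp_graphLaw_le_of_defect_le hp continuous_pathDist (pathDist_triangle hp)
    (pathDist_rpow_le_pathMoment_add hp _) continuous_pathDist (pathDist_triangle hp)
    (pathDist_rpow_le_pathMoment_add hp _) g Q _ _ _ hQ.le hν.le hk.le hk'.le c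

end StopSpace

lemma continuous_ballTop {Z W : Type*} [TopologicalSpace Z] {D : W → W → ℝ≥0∞} {f : Z → W}
    (hf : ∀ z, ∀ η ≠ 0, ∀ᶠ z' in 𝓝 z, ∀ c, D c (f z') ≤ D c (f z) + η) :
    Continuous[_, ballTop D] f := by
  refine continuous_generateFrom_iff.2 ?_
  rintro _ ⟨c, r, -, rfl⟩
  refine isOpen_iff_mem_nhds.2 fun z hz ↦ ?_
  obtain ⟨s, hzs, hsr⟩ := exists_between (show D c (f z) < r from hz)
  filter_upwards [hf z _ (tsub_pos_of_lt hzs).ne'] with z' hz'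
  exact (hz' c).trans_lt <| by rwa [add_tsub_cancel_of_le hzs.le]

theorem stopping_finer_than_information_general {p : ℝ} (hp : 1 ≤ p) (N : ℕ) {E : Type*}
    [PseudoMetricSpace E] [MeasurableSpace E] [PolishSpace E] [BorelSpace E] [Nonempty E] :
    TopologicalSpace.induced (Subtype.val : StopSpace p N E → _) (stopTopWp p edist N) ≤
      .induced Subtype.val (infoTopWp p edist N) := by
  simp only [infoTopWp, induced_iInf, le_iInf_iff, induced_compose]
  intro t ht h
  rw [← continuous_iff_le_induced]
  refine continuous_ballTop fun μ η hη ↦ ?_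
  have hp₀ := zero_lt_one.trans_le hp
  have hηp : η ^ p ≠ 0 := (ENNReal.rpow_pos_of_nonneg (pos_iff_ne_zero.2 hη) hp₀.le).ne'
  have hη' : η ^ p / 6 ≠ 0 := (ENNReal.div_pos hηp ofNat_ne_top).ne'
  have hev := StopSpace.eventually_Wp_infoMap_le hp ht (by omega) hη' μ
  rwa [ENNReal.mul_div_cancel (by simp) (by simp), one_div, ENNReal.rpow_rpow_inv hp₀.ne'] at hev

end InfoMap

/-- **Lemma 6.5.**  The `𝒲_p`-optimal stopping topology is finer than the
`𝒲_p`-information topology: every information-open set is stopping-open. -/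
theorem stopping_finer_than_information
    {X : Type} [MetricSpace X] [CompleteSpace X] [SecondCountableTopology X]
    [MeasurableSpace X] [BorelSpace X] [Nonempty X]
    (p : ℝ) (hp : 1 ≤ p) (N : ℕ) (hN : 0 < N) :
    let d : X → X → ℝ≥0∞ := edist
    let P := {μ : Measure (Fin N → X) // MemPp p (pathDist p d) μ}
    ∀ U : Set P,
      @IsOpen P (TopologicalSpace.induced Subtype.val (infoTopWp (Y := X) p d N)) U →
      @IsOpen P (TopologicalSpace.induced Subtype.val (stopTopWp (Y := X) p d N)) U :=
  stopping_finer_than_information_general hp N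

end AWPaper
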